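/- arXiv:math/0403092 — 5 statements merged into one kernel-verified Lean document; each statement's English description precedes it below -/
import Mathlib

section
/- Let g ≥ 2 be an integer and let B be a bracket of genus g with rational values that has nonnegative degree and satisfies both the string relation and the dilaton relation. Then the formal power series F(q) = Σ_{n≥0} (q^n/n!) · Σ_{(d_1,…,d_n) ∈ ℕ^n, d_1+⋯+d_n ≤ 3g−3+n} B({d_1,…,d_n}) lies in the algebra 𝒜 (the inner sum is over all ordered n-tuples; it is finite by the degree condition, and the n = 0 term is B(∅)). -/
/-- `Y = Σ_{n≥1} (n^{n-1}/n!) qⁿ` as a formal power series over `ℚ`. -/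
noncomputable def Yq : PowerSeries ℚ :=
  PowerSeries.mk fun n => if n = 0 then 0 else (n : ℚ) ^ (n - 1) / n.factorial

/-- `Z = Σ_{n≥1} (nⁿ/n!) qⁿ` as a formal power series over `ℚ`. -/
noncomputable def Zq : PowerSeries ℚ :=
  PowerSeries.mk fun n => if n = 0 then 0 else (n : ℚ) ^ n / n.factorial

/-- A bracket `B` (a function from finite multisets of nonnegative integers to `ℚ`)
satisfies the string relation if
`B(m + {0}) = Σ_{d ∈ m, d ≥ 1} B(m − {d} + {d−1})`,
the sum being over the elements of `m` counted with multiplicity, omitting those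
equal to `0`. -/
def StringRel (B : Multiset ℕ → ℚ) : Prop :=
  ∀ m : Multiset ℕ,
    B (0 ::ₘ m) = (m.map fun d => if d = 0 then 0 else B ((d - 1) ::ₘ m.erase d)).sum

/-- A bracket `B` of genus `g` satisfies the dilaton relation if
`B(m + {1}) = (2g − 2 + |m|)·B(m)` for every finite multiset `m`. -/
def DilatonRel (g : ℕ) (B : Multiset ℕ → ℚ) : Prop :=
  ∀ m : Multiset ℕ, B (1 ::ₘ m) = (2 * (g : ℚ) - 2 + Multiset.card m) * B m

/-- A bracket `B` of genus `g` has nonnegative degree if `B(m) = 0` whenever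
`Σ_{d ∈ m} d > 3g − 3 + |m|`. -/
def NonnegDegree (g : ℕ) (B : Multiset ℕ → ℚ) : Prop :=
  ∀ m : Multiset ℕ, (3 * (g : ℤ) - 3 + Multiset.card m < m.sum) → B m = 0

/-!
Extend the bracket to a linear functional `L` on `ℚ[x₀, x₁, …]`, so that
`F = Σ_n L(eⁿ) qⁿ / n!` with `e = x₀ + x₁ + x₂ + ⋯`. Let `D` be the derivation `x_d ↦ x_{d-1}`,
`x₀ ↦ 0`. The string relation says `L(x₀ p) = L(D p)`, and `D e = e` gives
`L(x₀ʲ eⁿ) = nʲ L(eⁿ)`. Therefore substituting `q e^{-q}` for `q` in `F` has the effect of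
replacing `e` by `e - x₀ = x₁ + f`, where `f = x₂ + x₃ + ⋯`. The dilaton relation then removes
`x₁`, and the result of the substitution is `Σ_k L(f^k) / k! · q^k (1 - q)^{-(2g - 2 + k)}`, in
which only `k ≤ 3g - 3` contribute: giving `x_d` the weight `d - 1`, the functional `L` kills all
monomials of weight above `3g - 3`, and every variable of `f` has weight at least `1`. The same
substitution turns `Z` into `q / (1 - q)`, and hence `F = Σ_k L(f^k) / k! · Z^k (1 + Z)^{2g - 2}`.

The infinite sums `e` and `f` are truncated at an index so large that `L` kills the error terms.
-/

section PowerSeries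

open PowerSeries

open scoped PowerSeries

theorem subst_injective_of_isUnit_coeff_one {R : Type*} [CommRing R] {P : R⟦X⟧}
    (h₀ : constantCoeff P = 0) (h₁ : IsUnit (coeff 1 P)) :
    Function.Injective fun F : R⟦X⟧ => F.subst P :=
  Function.LeftInverse.injective (g := fun F : R⟦X⟧ => F.subst (P.substInvOfIsUnit h₁))
    fun F => by
      beta_reduce
      rw [subst_comp_subst_apply (.of_constantCoeff_zero' h₀) (HasSubst.substInvOfIsUnit P h₁),
        subst_substInvOfIsUnit_right P h₀ h₁, X_subst]

theorem coeff_mk_one_pow {K : Type*} [Field K] [CharZero K] (d n : ℕ) :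
    coeff n ((mk 1 : K⟦X⟧) ^ d) = (ascPochhammer K n).eval (d : K) / n.factorial := by
  have hn : (n.factorial : K) ≠ 0 := Nat.cast_ne_zero.2 n.factorial_ne_zero
  rw [eq_div_iff hn, ← ascPochhammer_eval_cast, ascPochhammer_nat_eq_ascFactorial,
    Nat.ascFactorial_eq_factorial_mul_choose', Nat.cast_mul, mul_comm]
  congr 1
  cases d with
  | zero => cases n <;> simp [coeff_one]
  | succ d =>
    rw [mk_one_pow_eq_mk_choose_add, coeff_mk, Nat.add_right_comm, Nat.add_sub_cancel,
      Nat.choose_symm_add]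

theorem sum_neg_one_pow_mul_choose_mul_pow_self {R : Type*} [CommRing R] (c : ℕ) :
    ∑ n ∈ Finset.range (c + 1), (-1) ^ (c - n) * (c.choose n : R) * (n : R) ^ c =
      c.factorial := by
  simpa [fwdDiff_iter_eq_sum_shift] using
    congrFun (fwdDiff_iter_eq_factorial (R := R) (n := c)) 0

/-- The series `q e^{-q}`. It is the compositional inverse of the tree series `Yq`, so that
substituting it for `q` undoes the change of variable hidden in `Yq` and `Zq`. -/
noncomputable def xMulExpNeg (K : Type*) [Field K] [CharZero K] : K⟦X⟧ :=
  X * rescale (-1 : K) (exp K)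

section Field

variable {K : Type*} [Field K] [CharZero K]

theorem hasSubst_xMulExpNeg : HasSubst (xMulExpNeg K) :=
  .of_constantCoeff_zero' (by simp [xMulExpNeg])

theorem subst_xMulExpNeg_injective :
    Function.Injective fun F : K⟦X⟧ => F.subst (xMulExpNeg K) :=
  subst_injective_of_isUnit_coeff_one (by simp [xMulExpNeg])
    (by rw [xMulExpNeg, coeff_succ_X_mul 0]; simp)

theorem coeff_xMulExpNeg_pow (n c : ℕ) :
    coeff c (xMulExpNeg K ^ n) =
      if n ≤ c then (-(n : K)) ^ (c - n) / (c - n).factorial else 0 := by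
  rw [xMulExpNeg, mul_pow, ← map_pow, exp_pow_eq_rescale_exp, coeff_X_pow_mul']
  refine if_congr Iff.rfl ?_ rfl
  rw [coeff_rescale, coeff_rescale, coeff_exp, neg_pow (n : K)]
  simp [div_eq_mul_inv, mul_assoc]

theorem coeff_subst_xMulExpNeg (F : K⟦X⟧) (c : ℕ) :
    coeff c (F.subst (xMulExpNeg K)) =
      ∑ n ∈ Finset.range (c + 1), coeff n F * ((-(n : K)) ^ (c - n) / (c - n).factorial) := by
  rw [coeff_subst' hasSubst_xMulExpNeg,
    finsum_eq_sum_of_support_subset (s := Finset.range (c + 1))]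
  · refine Finset.sum_congr rfl fun n hn => ?_
    rw [coeff_xMulExpNeg_pow, if_pos (Finset.mem_range_succ_iff.1 hn), smul_eq_mul]
  · refine fun n hn => Finset.mem_coe.2 (Finset.mem_range_succ_iff.2 ?_)
    by_contra hcn
    exact hn (by simp only [coeff_xMulExpNeg_pow, if_neg hcn, smul_zero])

end Field

theorem coeff_one_add_Zq (n : ℕ) : coeff n (1 + Zq) = (n : ℚ) ^ n / n.factorial := by
  cases n <;> simp [Zq, coeff_one]

theorem one_add_Zq_subst_xMulExpNeg : (1 + Zq).subst (xMulExpNeg ℚ) = mk 1 := by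
  ext c
  have hc : (c.factorial : ℚ) ≠ 0 := by positivity
  rw [coeff_subst_xMulExpNeg, coeff_mk, Pi.one_apply, ← div_eq_one_iff_eq hc |>.2
    (sum_neg_one_pow_mul_choose_mul_pow_self c), Finset.sum_div]
  refine Finset.sum_congr rfl fun n hn => ?_
  have hnc : n ≤ c := Finset.mem_range_succ_iff.1 hn
  rw [coeff_one_add_Zq, Nat.cast_choose ℚ hnc, neg_pow (n : ℚ),
    ← Nat.add_sub_of_le hnc, pow_add (n : ℚ), Nat.add_sub_of_le hnc]
  field_simp

theorem Zq_subst_xMulExpNeg : Zq.subst (xMulExpNeg ℚ) = X * mk 1 := by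
  have h := one_add_Zq_subst_xMulExpNeg
  rw [subst_add hasSubst_xMulExpNeg, ← coe_substAlgHom hasSubst_xMulExpNeg, map_one,
    coe_substAlgHom] at h
  linear_combination h + mk_one_mul_one_sub_eq_one ℚ

theorem coeff_Zq_pow_mul_one_add_Zq_pow_subst_xMulExpNeg (k d c : ℕ) :
    coeff c ((Zq ^ k * (1 + Zq) ^ d).subst (xMulExpNeg ℚ)) =
      if k ≤ c then (ascPochhammer ℚ (c - k)).eval ((d : ℚ) + k) / (c - k).factorial else 0 := by
  have hsubst : (Zq ^ k * (1 + Zq) ^ d).subst (xMulExpNeg ℚ) = X ^ k * mk 1 ^ (d + k) := by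
    rw [subst_mul hasSubst_xMulExpNeg, subst_pow hasSubst_xMulExpNeg,
      subst_pow hasSubst_xMulExpNeg, Zq_subst_xMulExpNeg, one_add_Zq_subst_xMulExpNeg]
    ring
  rw [hsubst, coeff_X_pow_mul', coeff_mk_one_pow, Nat.cast_add]

end PowerSeries

section MvPolynomial

open MvPolynomial

theorem derivation_multiset_prod {ι R A M : Type*} [DecidableEq ι] [CommSemiring R]
    [CommSemiring A] [Algebra R A] [AddCommMonoid M] [Module A M] [Module R M]
    (D : Derivation R A M) (f : ι → A) (m : Multiset ι) :
    D (m.map f).prod = (m.map fun i => ((m.erase i).map f).prod • D (f i)).sum := by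
  induction m using Multiset.induction_on with
  | empty => simp
  | cons a m ih =>
    have h : ∀ i ∈ m, (((a ::ₘ m).erase i).map f).prod • D (f i) =
        f a • ((m.erase i).map f).prod • D (f i) := fun i hi => by
      rw [Multiset.erase_cons_tail_of_mem hi, Multiset.map_cons, Multiset.prod_cons, mul_smul]
    rw [Multiset.map_cons, Multiset.prod_cons, Derivation.leibniz, ih, Multiset.map_cons,
      Multiset.sum_cons, Multiset.erase_cons_head, Multiset.map_congr rfl h,
      Multiset.smul_sum, Multiset.map_map, add_comm]
    rfl

theorem monomial_one_eq_prod_X {σ R : Type*} [CommSemiring R] (s : σ →₀ ℕ) :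
    (monomial s 1 : MvPolynomial σ R) = (s.toMultiset.map X).prod := by
  rw [Finsupp.toMultiset_map, Finsupp.prod_toMultiset, monomial_eq, C_1, one_mul,
    Finsupp.prod_mapDomain_index pow_zero pow_add]

section Weight

variable {σ R M : Type*} [CommSemiring R] [AddCommMonoid M] (w : σ → M)

theorem weight_eq_sum_map_toMultiset (s : σ →₀ ℕ) :
    Finsupp.weight w s = (s.toMultiset.map w).sum := by
  induction s using Finsupp.induction_linear with
  | zero => simp
  | add s t hs ht => rw [map_add, hs, ht, map_add, Multiset.map_add, Multiset.sum_add]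
  | single a n => simp [Finsupp.weight_single, Multiset.map_nsmul, Multiset.sum_nsmul]

variable [Preorder M]

/-- The decreasing filtration of a polynomial ring by weight: the polynomials all of whose
monomials have weight at least `k`, when the variable `i` has weight `w i`. -/
noncomputable def weightGE (R : Type*) [CommSemiring R] (k : M) :
    Submodule R (MvPolynomial σ R) :=
  restrictSupport R {s | k ≤ Finsupp.weight w s}

variable {w}

theorem weightGE_antitone : Antitone (weightGE w R) :=
  fun _ _ h => restrictSupport_mono _ fun _ => h.trans

theorem X_mem_weightGE (i : σ) : (X i : MvPolynomial σ R) ∈ weightGE w R (w i) :=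
  (monomial_mem_restrictSupport R).2 (.inl (by simp [Finsupp.weight_single]))

theorem one_mem_weightGE_zero : (1 : MvPolynomial σ R) ∈ weightGE w R 0 :=
  (monomial_mem_restrictSupport R).2 (.inl (by simp))

variable [IsOrderedAddMonoid M]

theorem mul_mem_weightGE {k l : M} {p q : MvPolynomial σ R} (hp : p ∈ weightGE w R k)
    (hq : q ∈ weightGE w R l) : p * q ∈ weightGE w R (k + l) := by
  have hpq := Submodule.mul_mem_mul hp hq
  rw [weightGE, weightGE, ← restrictSupport_add] at hpq
  refine restrictSupport_mono _ ?_ hpq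
  rintro _ ⟨s, hs, t, ht, rfl⟩
  exact (add_le_add hs ht).trans_eq (map_add _ s t).symm

theorem pow_mem_weightGE {k : M} {p : MvPolynomial σ R} (hp : p ∈ weightGE w R k) (n : ℕ) :
    p ^ n ∈ weightGE w R (n • k) := by
  induction n with
  | zero => simpa using one_mem_weightGE_zero
  | succ n ih => simpa only [pow_succ, succ_nsmul] using mul_mem_weightGE ih hp

theorem pow_sub_pow_mem_weightGE {R : Type*} [CommRing R] {k : M} {p q : MvPolynomial σ R}
    (hp : p ∈ weightGE w R 0) (hq : q ∈ weightGE w R 0) (hpq : p - q ∈ weightGE w R k) (n : ℕ) :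
    p ^ n - q ^ n ∈ weightGE w R k := by
  have hpow {r : MvPolynomial σ R} (hr : r ∈ weightGE w R 0) (i : ℕ) :
      r ^ i ∈ weightGE w R 0 := by
    simpa using pow_mem_weightGE hr i
  rw [← (Commute.all p q).mul_geom_sum₂, ← add_zero k]
  refine mul_mem_weightGE hpq (Submodule.sum_mem _ fun i _ => ?_)
  simpa using mul_mem_weightGE (hpow hp i) (hpow hq (n - 1 - i))

end Weight

section VarSum

variable (R : Type*) [CommRing R]

/-- The derivation `x_d ↦ x_{d-1}`, `x₀ ↦ 0` of `R[x₀, x₁, …]`, which describes the right-hand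
side of the string relation. -/
noncomputable def lowering : Derivation R (MvPolynomial ℕ R) (MvPolynomial ℕ R) :=
  mkDerivation R fun d => if d = 0 then 0 else X (d - 1)

theorem lowering_X (d : ℕ) : lowering R (X d) = if d = 0 then 0 else X (d - 1) :=
  mkDerivation_X R _ d

theorem lowering_X_zero_pow (j : ℕ) : lowering R (X 0 ^ j) = 0 := by
  simp [Derivation.leibniz_pow, lowering_X]

/-- The sum `x_a + x_{a+1} + ⋯ + x_{b-1}`. With `b` large it stands for the infinite sum of all
variables of index at least `a`. -/
noncomputable def varSum (a b : ℕ) : MvPolynomial ℕ R :=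
  ∑ d ∈ Finset.Ico a b, X d

theorem varSum_succ_right {a b : ℕ} (h : a ≤ b) : varSum R a (b + 1) = varSum R a b + X b :=
  Finset.sum_Ico_succ_top h _

theorem varSum_eq_add_varSum_succ {a b : ℕ} (h : a < b) :
    varSum R a b = X a + varSum R (a + 1) b :=
  Finset.sum_eq_sum_Ico_succ_bot h _

theorem varSum_add_varSum {a b c : ℕ} (hab : a ≤ b) (hbc : b ≤ c) :
    varSum R a b + varSum R b c = varSum R a c :=
  Finset.sum_Ico_consecutive _ hab hbc

theorem varSum_pow (a b n : ℕ) :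
    varSum R a b ^ n =
      ∑ d ∈ Fintype.piFinset fun _ : Fin n => Finset.Ico a b, ∏ i, X (d i) :=
  Finset.sum_pow' _ _ n

theorem isHomogeneous_varSum (a b : ℕ) : (varSum R a b).IsHomogeneous 1 :=
  .sum _ _ _ fun d _ => isHomogeneous_X R d

theorem lowering_varSum_succ (b : ℕ) : lowering R (varSum R 0 (b + 1)) = varSum R 0 b := by
  simp [varSum, Finset.sum_range_succ', lowering_X]

theorem lowering_varSum_succ_pow (b n : ℕ) :
    lowering R (varSum R 0 (b + 1) ^ n) =
      n • (varSum R 0 (b + 1) ^ n - varSum R 0 (b + 1) ^ (n - 1) * X b) := by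
  rw [Derivation.leibniz_pow, lowering_varSum_succ,
    eq_sub_of_add_eq (varSum_succ_right R b.zero_le).symm, smul_eq_mul, mul_sub]
  cases n <;> simp [pow_succ]

/-- The weight of `x_d` for which a bracket of genus `g` and nonnegative degree kills the monomials
of weight larger than `3g - 3`. -/
def excess (d : ℕ) : ℤ := d - 1

theorem sum_map_excess (m : Multiset ℕ) :
    (m.map excess).sum = (m.sum : ℤ) - Multiset.card m := by
  induction m using Multiset.induction_on with
  | empty => simp
  | cons d m ih =>
    rw [Multiset.map_cons, Multiset.sum_cons, ih, Multiset.sum_cons, Multiset.card_cons, excess]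
    push_cast
    ring

variable {R}

theorem varSum_mem_weightGE (a b : ℕ) : varSum R a b ∈ weightGE excess R ((a : ℤ) - 1) :=
  Submodule.sum_mem _ fun _ hd => weightGE_antitone
    (sub_le_sub_right (Nat.cast_le.2 (Finset.mem_Ico.1 hd).1) 1) (X_mem_weightGE _)

end VarSum

end MvPolynomial

section Bracket

open MvPolynomial

/-- The linear extension of a bracket to `ℚ[x₀, x₁, …]`, a multiset `{d₁, …, dₙ}` being identified
with the monomial `x_{d₁} ⋯ x_{dₙ}`. -/
noncomputable def bracketFunctional (B : Multiset ℕ → ℚ) : MvPolynomial ℕ ℚ →ₗ[ℚ] ℚ :=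
  (basisMonomials ℕ ℚ).constr ℚ fun s => B s.toMultiset

theorem bracketFunctional_monomial (B : Multiset ℕ → ℚ) (s : ℕ →₀ ℕ) (c : ℚ) :
    bracketFunctional B (monomial s c) = c * B s.toMultiset := by
  have h : monomial s c = c • basisMonomials ℕ ℚ s := by simp [smul_monomial]
  rw [h, map_smul, bracketFunctional, Module.Basis.constr_basis, smul_eq_mul]

theorem bracketFunctional_prod_X (B : Multiset ℕ → ℚ) (m : Multiset ℕ) :
    bracketFunctional B (m.map X).prod = B m := by
  rw [← Multiset.toFinsupp_toMultiset m, ← monomial_one_eq_prod_X, bracketFunctional_monomial,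
    one_mul]

theorem bracketFunctional_X_zero_mul {B : Multiset ℕ → ℚ} (hstr : StringRel B)
    (p : MvPolynomial ℕ ℚ) :
    bracketFunctional B (X 0 * p) = bracketFunctional B (lowering ℚ p) := by
  suffices h : bracketFunctional B ∘ₗ LinearMap.mulLeft ℚ (X 0) =
      bracketFunctional B ∘ₗ (lowering ℚ : MvPolynomial ℕ ℚ →ₗ[ℚ] MvPolynomial ℕ ℚ) from
    LinearMap.congr_fun h p
  refine (basisMonomials ℕ ℚ).ext fun s => ?_
  have hprod (d : ℕ) (m : Multiset ℕ) :
      X d * (m.map X).prod = (((d ::ₘ m).map X).prod : MvPolynomial ℕ ℚ) := by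
    rw [Multiset.map_cons, Multiset.prod_cons]
  simp only [coe_basisMonomials, LinearMap.comp_apply, LinearMap.mulLeft_apply,
    Derivation.coeFn_coe, monomial_one_eq_prod_X, hprod,
    bracketFunctional_prod_X, derivation_multiset_prod, map_multiset_sum, Multiset.map_map]
  rw [hstr]
  refine congrArg Multiset.sum (Multiset.map_congr rfl fun d _ => ?_)
  rcases eq_or_ne d 0 with rfl | hd
  · simp [lowering_X]
  · rw [Function.comp_apply, lowering_X, if_neg hd, if_neg hd, smul_eq_mul, mul_comm, hprod,
      bracketFunctional_prod_X]

theorem bracketFunctional_X_one_mul {g : ℕ} {B : Multiset ℕ → ℚ} (hdil : DilatonRel g B) {k : ℕ}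
    {p : MvPolynomial ℕ ℚ} (hp : p.IsHomogeneous k) :
    bracketFunctional B (X 1 * p) = (2 * (g : ℚ) - 2 + k) * bracketFunctional B p := by
  rw [p.as_sum, Finset.mul_sum, map_sum, map_sum, Finset.mul_sum]
  refine Finset.sum_congr rfl fun s hs => ?_
  have hcard : Multiset.card s.toMultiset = k := by
    rw [Finsupp.card_toMultiset, ← hp (mem_support_iff.1 hs)]
    simp [Finsupp.weight_apply, Finsupp.sum]
  rw [X, monomial_mul, one_mul, bracketFunctional_monomial, bracketFunctional_monomial, map_add,
    Finsupp.toMultiset_single, one_smul, Multiset.singleton_add, hdil, hcard]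
  ring

theorem bracketFunctional_X_one_pow_mul {g : ℕ} {B : Multiset ℕ → ℚ} (hdil : DilatonRel g B)
    {k : ℕ} {p : MvPolynomial ℕ ℚ} (hp : p.IsHomogeneous k) (b : ℕ) :
    bracketFunctional B (X 1 ^ b * p) =
      (ascPochhammer ℚ b).eval (2 * (g : ℚ) - 2 + k) * bracketFunctional B p := by
  induction b with
  | zero => simp
  | succ b ih =>
    have hb : (X 1 ^ b * p).IsHomogeneous (b + k) := by
      simpa using ((isHomogeneous_X ℚ 1).pow b).mul hp
    rw [pow_succ', mul_assoc, bracketFunctional_X_one_mul hdil hb, ih, ascPochhammer_succ_eval]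
    push_cast
    ring

theorem bracketFunctional_eq_zero_of_mem_weightGE {g : ℕ} {B : Multiset ℕ → ℚ}
    (hdeg : NonnegDegree g B) {p : MvPolynomial ℕ ℚ}
    (hp : p ∈ weightGE excess ℚ (3 * (g : ℤ) - 2)) : bracketFunctional B p = 0 := by
  rw [p.as_sum, map_sum]
  refine Finset.sum_eq_zero fun s hs => ?_
  have hs' : 3 * (g : ℤ) - 2 ≤ Finsupp.weight excess s := hp hs
  rw [weight_eq_sum_map_toMultiset, sum_map_excess] at hs'
  rw [bracketFunctional_monomial, hdeg _ (by linarith), mul_zero]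

theorem bracketFunctional_X_zero_pow_mul_varSum_pow {g : ℕ} {B : Multiset ℕ → ℚ}
    (hdeg : NonnegDegree g B) (hstr : StringRel B) {M n j : ℕ} (hM : 3 * g + n + j ≤ M) :
    bracketFunctional B (X 0 ^ j * varSum ℚ 0 (M + 1) ^ n) =
      (n : ℚ) ^ j * bracketFunctional B (varSum ℚ 0 (M + 1) ^ n) := by
  induction j with
  | zero => simp
  | succ j ih =>
    set e := varSum ℚ 0 (M + 1)
    have hlow : lowering ℚ (X 0 ^ j * e ^ n) =
        n • (X 0 ^ j * e ^ n - X 0 ^ j * (e ^ (n - 1) * X M)) := by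
      rw [Derivation.leibniz, lowering_X_zero_pow, smul_zero, add_zero, lowering_varSum_succ_pow,
        smul_eq_mul, mul_smul_comm, mul_sub]
    have htail : bracketFunctional B (X 0 ^ j * (e ^ (n - 1) * X M)) = 0 := by
      refine bracketFunctional_eq_zero_of_mem_weightGE hdeg (weightGE_antitone ?_
        (mul_mem_weightGE (pow_mem_weightGE (X_mem_weightGE 0) j)
          (mul_mem_weightGE (pow_mem_weightGE (varSum_mem_weightGE 0 (M + 1)) (n - 1))
            (X_mem_weightGE M))))
      simp only [excess, nsmul_eq_mul]
      omega
    rw [pow_succ', mul_assoc, bracketFunctional_X_zero_mul hstr, hlow, map_nsmul, map_sub, htail,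
      sub_zero, ih (by omega), nsmul_eq_mul]
    ring

theorem bracketFunctional_varSum_two_pow_eq_zero {g : ℕ} {B : Multiset ℕ → ℚ}
    (hdeg : NonnegDegree g B) {k : ℕ} (hk : 3 * g - 2 ≤ k) (M : ℕ) :
    bracketFunctional B (varSum ℚ 2 M ^ k) = 0 := by
  refine bracketFunctional_eq_zero_of_mem_weightGE hdeg
    (weightGE_antitone ?_ (pow_mem_weightGE (varSum_mem_weightGE 2 M) k))
  simp only [nsmul_eq_mul]
  omega

theorem bracketFunctional_varSum_two_pow_congr {g : ℕ} {B : Multiset ℕ → ℚ}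
    (hdeg : NonnegDegree g B) {M N : ℕ} (h₂ : 2 ≤ M) (hM : 3 * g ≤ M + 1) (hMN : M ≤ N) (k : ℕ) :
    bracketFunctional B (varSum ℚ 2 N ^ k) = bracketFunctional B (varSum ℚ 2 M ^ k) := by
  have hnonneg (b : ℕ) : varSum ℚ 2 b ∈ weightGE excess ℚ 0 :=
    weightGE_antitone (by simp) (varSum_mem_weightGE 2 b)
  have hdiff : varSum ℚ 2 N - varSum ℚ 2 M ∈ weightGE excess ℚ (3 * (g : ℤ) - 2) := by
    rw [← varSum_add_varSum ℚ h₂ hMN, add_sub_cancel_left]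
    exact weightGE_antitone (by omega) (varSum_mem_weightGE M N)
  rw [← sub_eq_zero, ← map_sub]
  exact bracketFunctional_eq_zero_of_mem_weightGE hdeg
    (pow_sub_pow_mem_weightGE (hnonneg N) (hnonneg M) hdiff k)

theorem bracketFunctional_X_one_add_pow {g : ℕ} {B : Multiset ℕ → ℚ} (hdil : DilatonRel g B)
    {p : MvPolynomial ℕ ℚ} (hp : p.IsHomogeneous 1) (c : ℕ) :
    bracketFunctional B ((X 1 + p) ^ c) / c.factorial =
      ∑ k ∈ Finset.range (c + 1), bracketFunctional B (p ^ k) / k.factorial *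
        ((ascPochhammer ℚ (c - k)).eval (2 * (g : ℚ) - 2 + k) / (c - k).factorial) := by
  rw [add_comm, add_pow, map_sum, Finset.sum_div]
  refine Finset.sum_congr rfl fun k hk => ?_
  have hpk : (p ^ k).IsHomogeneous k := by simpa using hp.pow k
  rw [← nsmul_eq_mul', map_nsmul, mul_comm, bracketFunctional_X_one_pow_mul hdil hpk,
    nsmul_eq_mul, Nat.cast_choose ℚ (Finset.mem_range_succ_iff.1 hk)]
  field_simp

theorem bracketFunctional_X_one_add_varSum_pow {g : ℕ} {B : Multiset ℕ → ℚ}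
    (hdeg : NonnegDegree g B) (hstr : StringRel B) {M c : ℕ} (hM : 3 * g + c + 1 ≤ M) :
    bracketFunctional B ((X 1 + varSum ℚ 2 (M + 1)) ^ c) =
      ∑ n ∈ Finset.range (c + 1),
        c.choose n * (-(n : ℚ)) ^ (c - n) * bracketFunctional B (varSum ℚ 0 (M + 1) ^ n) := by
  have hsplit : X 1 + varSum ℚ 2 (M + 1) = varSum ℚ 0 (M + 1) + -X 0 := by
    rw [varSum_eq_add_varSum_succ ℚ (a := 0) (by omega),
      varSum_eq_add_varSum_succ ℚ (a := 0 + 1) (by omega)]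
    ring
  rw [hsplit, add_pow, map_sum]
  refine Finset.sum_congr rfl fun n hn => ?_
  have hnc : n ≤ c := Finset.mem_range_succ_iff.1 hn
  have hterm : varSum ℚ 0 (M + 1) ^ n * (-X 0) ^ (c - n) * (c.choose n : MvPolynomial ℕ ℚ) =
      (c.choose n * (-1 : ℚ) ^ (c - n)) • (X 0 ^ (c - n) * varSum ℚ 0 (M + 1) ^ n) := by
    rw [smul_eq_C_mul, neg_pow]
    simp only [map_mul, map_pow, map_neg, map_one, map_natCast]
    ring
  rw [hterm, map_smul, bracketFunctional_X_zero_pow_mul_varSum_pow hdeg hstr (by omega),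
    smul_eq_mul, neg_pow (n : ℚ)]
  ring

/-- The generating series `F(q)` of the brackets summed over all arguments. The inner sum ranges
over the tuples of total at most `3g - 3 + n`, outside of which brackets of nonnegative degree
vanish. The truncated subtraction only enlarges this range when `g = 0`. -/
noncomputable def bracketSeries (g : ℕ) (B : Multiset ℕ → ℚ) : PowerSeries ℚ :=
  PowerSeries.mk fun n =>
    (1 / (n.factorial : ℚ)) *
      ∑ d ∈ (Fintype.piFinset fun _ : Fin n =>
          Finset.range (3 * g - 3 + n + 1)).filter
          (fun d => ∑ i, d i ≤ 3 * g - 3 + n),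
        B (List.ofFn d : Multiset ℕ)

theorem bracketFunctional_varSum_pow (B : Multiset ℕ → ℚ) (a b n : ℕ) :
    bracketFunctional B (varSum ℚ a b ^ n) =
      ∑ d ∈ Fintype.piFinset fun _ : Fin n => Finset.Ico a b, B (List.ofFn d : Multiset ℕ) := by
  rw [varSum_pow, map_sum]
  refine Finset.sum_congr rfl fun d _ => ?_
  rw [← bracketFunctional_prod_X B, Multiset.map_coe, Multiset.prod_coe, List.map_ofFn,
    List.prod_ofFn]
  rfl

theorem coeff_bracketSeries {g : ℕ} {B : Multiset ℕ → ℚ} (hdeg : NonnegDegree g B) {M n : ℕ}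
    (hM : 3 * g + n ≤ M) :
    PowerSeries.coeff n (bracketSeries g B) =
      bracketFunctional B (varSum ℚ 0 (M + 1) ^ n) / n.factorial := by
  rw [bracketSeries, PowerSeries.coeff_mk, one_div_mul_eq_div, bracketFunctional_varSum_pow]
  congr 1
  refine Finset.sum_subset (fun d hd => ?_) fun d _ hd => hdeg _ ?_
  · simp only [Finset.mem_filter, Fintype.mem_piFinset, Finset.mem_range, Finset.mem_Ico] at hd ⊢
    exact fun i => ⟨Nat.zero_le _, by have := hd.1 i; omega⟩
  · have hsum : 3 * g - 3 + n < ∑ i, d i := by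
      by_contra! hle
      refine hd (Finset.mem_filter.2 ⟨Fintype.mem_piFinset.2 fun i => ?_, hle⟩)
      exact Finset.mem_range_succ_iff.2
        ((Finset.single_le_sum (fun _ _ => Nat.zero_le _) (Finset.mem_univ i)).trans hle)
    simp only [Multiset.coe_card, List.length_ofFn, Multiset.sum_coe, List.sum_ofFn]
    omega

theorem coeff_bracketSeries_subst_xMulExpNeg {g : ℕ} {B : Multiset ℕ → ℚ}
    (hdeg : NonnegDegree g B) (hstr : StringRel B) {M c : ℕ} (hM : 3 * g + c + 1 ≤ M) :
    PowerSeries.coeff c ((bracketSeries g B).subst (xMulExpNeg ℚ)) =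
      bracketFunctional B ((X 1 + varSum ℚ 2 (M + 1)) ^ c) / c.factorial := by
  rw [coeff_subst_xMulExpNeg, bracketFunctional_X_one_add_varSum_pow hdeg hstr hM, Finset.sum_div]
  refine Finset.sum_congr rfl fun n hn => ?_
  have hnc : n ≤ c := Finset.mem_range_succ_iff.1 hn
  rw [coeff_bracketSeries hdeg (M := M) (by omega), Nat.cast_choose ℚ hnc]
  field_simp

theorem coeff_bracketSeries_subst_xMulExpNeg_eq_sum {g : ℕ} {B : Multiset ℕ → ℚ}
    (hdeg : NonnegDegree g B) (hstr : StringRel B) (hdil : DilatonRel g B) (c : ℕ) :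
    PowerSeries.coeff c ((bracketSeries g B).subst (xMulExpNeg ℚ)) =
      ∑ k ∈ Finset.range (c + 1),
        bracketFunctional B (varSum ℚ 2 (3 * g + 2) ^ k) / k.factorial *
          ((ascPochhammer ℚ (c - k)).eval (2 * (g : ℚ) - 2 + k) / (c - k).factorial) := by
  rw [coeff_bracketSeries_subst_xMulExpNeg hdeg hstr (M := 3 * g + c + 1) le_rfl,
    bracketFunctional_X_one_add_pow hdil (isHomogeneous_varSum ℚ _ _)]
  refine Finset.sum_congr rfl fun k _ => ?_
  rw [bracketFunctional_varSum_two_pow_congr hdeg (M := 3 * g + 2) (by omega) (by omega)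
    (by omega)]

theorem bracketSeries_eq_sum {g : ℕ} {B : Multiset ℕ → ℚ}
    (hdeg : NonnegDegree g B) (hstr : StringRel B) (hdil : DilatonRel g B) :
    bracketSeries g B = ∑ k ∈ Finset.range (3 * g - 2),
      (bracketFunctional B (varSum ℚ 2 (3 * g + 2) ^ k) / k.factorial) •
        (Zq ^ k * (1 + Zq) ^ (2 * g - 2)) := by
  refine subst_xMulExpNeg_injective (PowerSeries.ext fun c => ?_)
  beta_reduce
  rw [coeff_bracketSeries_subst_xMulExpNeg_eq_sum hdeg hstr hdil,
    ← PowerSeries.coe_substAlgHom hasSubst_xMulExpNeg, map_sum, map_sum]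
  simp only [map_smul, PowerSeries.coe_substAlgHom, smul_eq_mul,
    coeff_Zq_pow_mul_one_add_Zq_pow_subst_xMulExpNeg, mul_ite, mul_zero, ← Finset.sum_filter]
  have hsub : {k ∈ Finset.range (3 * g - 2) | k ≤ c} ⊆ Finset.range (c + 1) := fun k hk =>
    Finset.mem_range_succ_iff.2 (Finset.mem_filter.1 hk).2
  have hvanish (k : ℕ) (hk : k ∈ Finset.range (c + 1))
      (hk' : k ∉ {k ∈ Finset.range (3 * g - 2) | k ≤ c}) :
      bracketFunctional B (varSum ℚ 2 (3 * g + 2) ^ k) = 0 := by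
    refine bracketFunctional_varSum_two_pow_eq_zero hdeg (not_lt.1 fun hlt => hk' ?_) _
    exact Finset.mem_filter.2 ⟨Finset.mem_range.2 hlt, Finset.mem_range_succ_iff.1 hk⟩
  rw [← Finset.sum_subset hsub fun k hk hk' => by rw [hvanish k hk hk', zero_div, zero_mul]]
  refine Finset.sum_congr rfl fun k hk => ?_
  have hg : 2 ≤ 2 * g := by
    have hlt := Finset.mem_range.1 (Finset.mem_filter.1 hk).1
    omega
  rw [Nat.cast_sub hg, Nat.cast_mul, Nat.cast_ofNat]

theorem bracket_series_mem_adjoin_general_s0 (g : ℕ) (B : Multiset ℕ → ℚ)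
    (hdeg : NonnegDegree g B) (hstr : StringRel B) (hdil : DilatonRel g B) :
    bracketSeries g B ∈ Algebra.adjoin ℚ {Zq} := by
  have hZ : Zq ∈ Algebra.adjoin ℚ {Zq} := Algebra.self_mem_adjoin_singleton ℚ Zq
  rw [bracketSeries_eq_sum hdeg hstr hdil]
  exact sum_mem fun k _ => Subalgebra.smul_mem _
    (mul_mem (pow_mem hZ k) (pow_mem (add_mem (one_mem _) hZ) _)) _

end Bracket

/-- For a genus `g ≥ 2` bracket `B` of nonnegative degree satisfying the string and
dilaton relations, the series
`F(q) = Σ_{n≥0} (qⁿ/n!) Σ_{(d₁,…,dₙ) ∈ ℕⁿ, Σdᵢ ≤ 3g−3+n} B({d₁,…,dₙ})`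
lies in the algebra `𝒜 = ℚ[Y,Z]`.  (The inner sum is over ordered `n`-tuples; since
`Σdᵢ ≤ 3g−3+n` forces each `dᵢ ≤ 3g−3+n`, it is encoded as a finite sum.) -/
theorem bracket_series_mem_adjoin (g : ℕ) (hg : 2 ≤ g) (B : Multiset ℕ → ℚ)
    (hdeg : NonnegDegree g B) (hstr : StringRel B) (hdil : DilatonRel g B) :
    (PowerSeries.mk fun n =>
        (1 / (n.factorial : ℚ)) *
          ∑ d ∈ (Fintype.piFinset fun _ : Fin n =>
              Finset.range (3 * g - 3 + n + 1)).filter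
              (fun d => ∑ i, d i ≤ 3 * g - 3 + n),
            B (List.ofFn d : Multiset ℕ)) ∈
      Algebra.adjoin ℚ {Yq, Zq} :=
  Algebra.adjoin_mono (by simp) (bracket_series_mem_adjoin_general_s0 g B hdeg hstr hdil)
end

section
/- Let g ≥ 2 and p ≥ 0 be integers, and let B be a bracket of genus g with rational values that has nonnegative degree and satisfies the string relation and the dilaton relation for every multiset of cardinality ≥ p. Let b_1, …, b_p be positive integers and set r = Σ_{i=1}^p (b_i − 1). Then the formal power series F(q) = Σ_{n ≥ p+r} (q^n/(n−p−r)!) · Σ_{(d_1,…,d_{n−r}) ∈ ℕ^{n−r}, d_1+⋯+d_{n−r} ≤ 3g−3+(n−r)} b_1^{d_1} ⋯ b_p^{d_p} · B({d_1,…,d_{n−r}}) lies in the algebra 𝒜. -/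
/-- A bracket `B` satisfies the string relation at the multiset `m` if
`B(m + {0}) = Σ_{d ∈ m, d ≥ 1} B(m − {d} + {d−1})`, the sum being over the elements
of `m` counted with multiplicity, omitting those equal to `0`. -/
def StringRelAt (B : Multiset ℕ → ℚ) (m : Multiset ℕ) : Prop :=
  B (0 ::ₘ m) = (m.map fun d => if d = 0 then 0 else B ((d - 1) ::ₘ m.erase d)).sum

/-- A bracket `B` of genus `g` satisfies the dilaton relation at the multiset `m` if
`B(m + {1}) = (2g − 2 + |m|)·B(m)`. -/
def DilatonRelAt (g : ℕ) (B : Multiset ℕ → ℚ) (m : Multiset ℕ) : Prop :=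
  B (1 ::ₘ m) = (2 * (g : ℚ) - 2 + Multiset.card m) * B m

/-!
The substitution `q = u e⁻ᵘ` sends `Y` to `u` and `1 + Z` to `1 / (1 - u)`, so it is enough to show
that `F` becomes a polynomial in `u`, `1 - u` and `1 / (1 - u)`.

Regard `B` as a linear functional on `ℚ[x₀, x₁, …]`. The string relation says that multiplication by
`x₀` acts under `B` as the derivation `x_{d+1} ↦ x_d`, and `Σ bᵈ x_d` is an eigenvector of that
derivation with eigenvalue `b`. The coefficients of `F` are the values of `B` at products of such
eigenvectors, and the exponentials produced by `q = u e⁻ᵘ` turn the insertion `Σ x_d` of each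
unmarked point into `Σ x_d - x₀`. By the dilaton relation, splitting off `x₁` as well contributes
powers of `1 / (1 - u)`. Every remaining insertion `Σ_{d ≥ 2} x_d` raises the weight by at least two
while the degree bound grows by one, so only finitely many terms are nonzero. The infinite sums are
truncated; the error terms have too large a weight for `B` to see them.
-/

namespace BracketSeries

section Substitution

open PowerSeries
open Finset hiding mk

/-- The series `u e⁻ᵘ`, the compositional inverse of `Y`: the change of variables
`q = u e⁻ᵘ` turns `ℚ[Y, Z]` into `ℚ[u, 1 / (1 - u)]`. -/
noncomputable def mulExpNeg : PowerSeries ℚ := X * rescale (-1 : ℚ) (exp ℚ)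

lemma constantCoeff_mulExpNeg : constantCoeff mulExpNeg = 0 := by
  simp [mulExpNeg]

lemma hasSubst_mulExpNeg : HasSubst mulExpNeg :=
  .of_constantCoeff_zero' constantCoeff_mulExpNeg

lemma coeff_mulExpNeg_pow (n N : ℕ) :
    coeff N (mulExpNeg ^ n) =
      if n ≤ N then (-(n : ℚ)) ^ (N - n) / (N - n).factorial else 0 := by
  rw [mulExpNeg, mul_pow, ← map_pow, exp_pow_eq_rescale_exp, coeff_X_pow_mul']
  split_ifs with h
  · simp only [coeff_rescale, coeff_exp, neg_pow (n : ℚ), map_div₀, map_one, map_natCast]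
    ring
  · rfl

lemma coeff_subst_mulExpNeg (F : PowerSeries ℚ) (N : ℕ) :
    coeff N (F.subst mulExpNeg) =
      ∑ n ∈ range (N + 1), coeff n F * ((-(n : ℚ)) ^ (N - n) / (N - n).factorial) := by
  rw [coeff_subst' hasSubst_mulExpNeg, finsum_eq_sum_of_support_subset (s := range (N + 1))]
  · refine sum_congr rfl fun n hn => ?_
    rw [coeff_mulExpNeg_pow, if_pos (mem_range_succ_iff.mp hn), smul_eq_mul]
  · intro n hn
    by_contra h
    rw [mem_coe, mem_range_succ_iff] at h
    simp [coeff_mulExpNeg_pow, h] at hn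

lemma subst_mulExpNeg_injective :
    Function.Injective fun F : PowerSeries ℚ => F.subst mulExpNeg := by
  have hunit : IsUnit (coeff 1 mulExpNeg) := by
    have hone : coeff 1 mulExpNeg = 1 := by simpa using coeff_mulExpNeg_pow 1 1
    exact hone ▸ isUnit_one
  refine Function.LeftInverse.injective (g := subst (mulExpNeg.substInvOfIsUnit hunit)) fun F => ?_
  rw [subst_comp_subst_apply hasSubst_mulExpNeg (.substInvOfIsUnit _ _),
    subst_substInvOfIsUnit_right _ constantCoeff_mulExpNeg, X_subst]

lemma sum_neg_one_pow_mul_choose_mul_pow (N j : ℕ) :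
    ∑ n ∈ range (N + 1), (-1 : ℚ) ^ (N - n) * N.choose n * (n : ℚ) ^ j =
      ((fwdDiff (1 : ℚ))^[N] (fun x : ℚ => x ^ j)) 0 := by
  simp [fwdDiff_iter_eq_sum_shift]

lemma pow_div_factorial_mul_neg_pow_div_factorial {n N e : ℕ} (hn : n ≤ N) :
    (n : ℚ) ^ e / n.factorial * ((-(n : ℚ)) ^ (N - n) / (N - n).factorial) =
      (-1 : ℚ) ^ (N - n) * N.choose n * (n : ℚ) ^ (e + (N - n)) / N.factorial := by
  rw [Nat.cast_choose ℚ hn, neg_pow, pow_add]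
  field_simp

lemma subst_mulExpNeg_Yq : Yq.subst mulExpNeg = X := by
  ext N
  rw [coeff_subst_mulExpNeg, coeff_X]
  rcases N with _ | N
  · simp [Yq]
  have hterm : ∀ n ∈ range (N + 1), coeff (n + 1) Yq *
      ((-((n + 1 : ℕ) : ℚ)) ^ (N + 1 - (n + 1)) / (N + 1 - (n + 1)).factorial) =
      (-1 : ℚ) ^ (N + 1 - (n + 1)) * (N + 1).choose (n + 1) * ((n + 1 : ℕ) : ℚ) ^ N /
        (N + 1).factorial := by
    intro n hn
    have hle : n + 1 ≤ N + 1 := by simpa [Nat.lt_succ_iff] using hn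
    have hexp : n + (N + 1 - (n + 1)) = N := by omega
    rw [Yq, coeff_mk, if_neg n.succ_ne_zero, Nat.add_sub_cancel,
      pow_div_factorial_mul_neg_pow_div_factorial hle, hexp]
  have hdiff := sum_neg_one_pow_mul_choose_mul_pow (N + 1) N
  rw [fwdDiff_iter_pow_eq_zero_of_lt N.lt_succ_self, Pi.zero_apply, sum_range_succ',
    add_eq_zero_iff_eq_neg] at hdiff
  rw [sum_range_succ', sum_congr rfl hterm, ← sum_div, hdiff]
  rcases N with _ | N <;> simp [Yq]

lemma subst_mulExpNeg_one_add_Zq : (1 + Zq).subst mulExpNeg = mk 1 := by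
  ext N
  have hterm : ∀ n ∈ range (N + 1), coeff n (1 + Zq) *
      ((-(n : ℚ)) ^ (N - n) / (N - n).factorial) =
      (-1 : ℚ) ^ (N - n) * N.choose n * (n : ℚ) ^ N / N.factorial := by
    intro n hn
    have hle : n ≤ N := mem_range_succ_iff.mp hn
    have hcoeff : coeff n (1 + Zq) = (n : ℚ) ^ n / n.factorial := by
      rcases n with _ | n <;> simp [Zq, coeff_one]
    rw [hcoeff, pow_div_factorial_mul_neg_pow_div_factorial hle, Nat.add_sub_cancel' hle]
  rw [coeff_subst_mulExpNeg, sum_congr rfl hterm, ← sum_div, sum_neg_one_pow_mul_choose_mul_pow,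
    fwdDiff_iter_eq_factorial]
  simp [Nat.factorial_ne_zero]

lemma mem_adjoin_Yq_Zq_iff {F : PowerSeries ℚ} :
    F ∈ Algebra.adjoin ℚ {Yq, Zq} ↔
      F.subst mulExpNeg ∈ Algebra.adjoin ℚ {(X : PowerSeries ℚ), mk 1} := by
  let φ : PowerSeries ℚ →ₐ[ℚ] PowerSeries ℚ := substAlgHom hasSubst_mulExpNeg
  have hφ (G : PowerSeries ℚ) : φ G = G.subst mulExpNeg :=
    congrFun (coe_substAlgHom hasSubst_mulExpNeg) G
  have hZ : φ Zq = mk 1 - 1 := by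
    rw [eq_sub_iff_add_eq', ← map_one φ, ← map_add, hφ, subst_mulExpNeg_one_add_Zq]
  have hadjoin : Algebra.adjoin ℚ {(X : PowerSeries ℚ), mk 1 - 1} =
      Algebra.adjoin ℚ {(X : PowerSeries ℚ), mk 1} := by
    have mem_left {S : Set (PowerSeries ℚ)} {x : PowerSeries ℚ} (hx : x ∈ S) :
        x ∈ Algebra.adjoin ℚ S := Algebra.subset_adjoin hx
    apply le_antisymm <;> refine Algebra.adjoin_le ?_ <;> rintro _ (rfl | rfl)
    · exact mem_left (by simp)
    · exact sub_mem (mem_left (by simp)) (one_mem _)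
    · exact mem_left (by simp)
    · exact sub_add_cancel (mk 1 : PowerSeries ℚ) 1 ▸ add_mem (mem_left (by simp)) (one_mem _)
  have hmap : (Algebra.adjoin ℚ {Yq, Zq}).map φ = Algebra.adjoin ℚ {(X : PowerSeries ℚ), mk 1} := by
    rw [AlgHom.map_adjoin, Set.image_pair, hφ Yq, subst_mulExpNeg_Yq, hZ, hadjoin]
  rw [← hmap, ← hφ]
  refine (Function.Injective.mem_set_image (f := φ) fun G H h => ?_).symm
  exact subst_mulExpNeg_injective (by simpa only [hφ] using h)

lemma subst_mulExpNeg_X_pow_mul_mk (β : ℕ) (c : ℕ → ℚ) :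
    (X ^ β * mk fun n => c n / n.factorial).subst mulExpNeg =
      X ^ β * mk fun N => (∑ k ∈ range (N + 1),
        (-((k : ℚ) + β)) ^ (N - k) * N.choose k * c k) / N.factorial := by
  ext N
  simp only [coeff_subst_mulExpNeg, coeff_X_pow_mul', coeff_mk]
  split_ifs with hN
  · obtain ⟨m, rfl⟩ := Nat.exists_eq_add_of_le hN
    rw [add_assoc, sum_range_add, sum_eq_zero (s := range β), zero_add, add_tsub_cancel_left,
      sum_div]
    · refine sum_congr rfl fun k hk => ?_
      rw [if_pos (Nat.le_add_right β k), add_tsub_cancel_left, Nat.add_sub_add_left,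
        Nat.cast_choose ℚ (mem_range_succ_iff.mp hk)]
      push_cast
      field_simp
      ring
    · intro k hk
      rw [if_neg (not_le.mpr (mem_range.mp hk)), zero_mul]
  · refine sum_eq_zero fun k hk => ?_
    rw [mem_range_succ_iff] at hk
    rw [if_neg (by omega), zero_mul]

end Substitution

section RisingSeries

open PowerSeries
open Finset hiding mk

variable {K : Type*} [Field K]

/-- The binomial series `(1 - u)⁻ᵃ`, with the rising factorial `a (a + 1) ⋯ (a + i - 1)` as the
`i`-th coefficient up to `i!`. -/
noncomputable def risingSeries (a : K) : PowerSeries K :=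
  mk fun i => (ascPochhammer K i).eval a / i.factorial

lemma risingSeries_zero : risingSeries (0 : K) = 1 := by
  ext i
  rcases i with _ | i <;> simp [risingSeries, coeff_one]

variable [CharZero K]

lemma one_sub_X_mul_risingSeries (a : K) :
    (1 - X) * risingSeries (a + 1) = risingSeries a := by
  ext i
  rcases i with _ | i
  · simp [risingSeries, sub_mul]
  have hleft : (ascPochhammer K (i + 1)).eval a = a * (ascPochhammer K i).eval (a + 1) := by
    simp [ascPochhammer_succ_left]
  rw [sub_mul, one_mul, map_sub, coeff_succ_X_mul, risingSeries, risingSeries, coeff_mk, coeff_mk,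
    coeff_mk, hleft, ascPochhammer_succ_eval, Nat.factorial_succ, Nat.cast_mul]
  have : ((i + 1 : ℕ) : K) ≠ 0 := Nat.cast_ne_zero.mpr i.succ_ne_zero
  have : (i.factorial : K) ≠ 0 := Nat.cast_ne_zero.mpr i.factorial_ne_zero
  field_simp
  push_cast
  ring

lemma risingSeries_intCast_mem_adjoin (a : ℤ) :
    risingSeries (a : K) ∈ Algebra.adjoin K {(X : PowerSeries K), mk 1} := by
  have hX : (X : PowerSeries K) ∈ Algebra.adjoin K {(X : PowerSeries K), mk 1} :=
    Algebra.subset_adjoin (by simp)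
  have hgeom : (mk 1 : PowerSeries K) ∈ Algebra.adjoin K {(X : PowerSeries K), mk 1} :=
    Algebra.subset_adjoin (by simp)
  induction a using Int.induction_on with
  | zero => simp [risingSeries_zero]
  | succ n ih =>
    have hsucc : risingSeries (((n : ℤ) + 1 : ℤ) : K) = mk 1 * risingSeries ((n : ℤ) : K) := by
      rw [← one_sub_X_mul_risingSeries ((n : ℤ) : K), ← mul_assoc, mk_one_mul_one_sub_eq_one,
        one_mul, Int.cast_add, Int.cast_one]
    exact hsucc ▸ mul_mem hgeom ih
  | pred n ih =>
    have hpred : risingSeries ((-(n : ℤ) - 1 : ℤ) : K) =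
        (1 - X) * risingSeries ((-(n : ℤ) : ℤ) : K) := by
      rw [← one_sub_X_mul_risingSeries]
      push_cast
      rw [sub_add_cancel]
    exact hpred ▸ mul_mem (sub_mem (one_mem _) hX) ih

lemma mk_sum_ascPochhammer_eq_sum_risingSeries (a : K) {h : ℕ → K} {T : ℕ}
    (hT : ∀ k, T ≤ k → h k = 0) :
    (mk fun N => (∑ k ∈ range (N + 1),
        (ascPochhammer K (N - k)).eval (a + k) * N.choose k * h k) / N.factorial) =
      ∑ k ∈ range T, (h k / k.factorial) • (X ^ k * risingSeries (a + k)) := by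
  ext N
  have hcoeff (k : ℕ) : coeff N ((h k / k.factorial) • (X ^ k * risingSeries (a + k))) =
      if k ≤ N then (ascPochhammer K (N - k)).eval (a + k) * N.choose k * h k / N.factorial
      else 0 := by
    rw [coeff_smul, coeff_X_pow_mul', risingSeries, coeff_mk, smul_eq_mul, mul_ite, mul_zero]
    refine ite_congr rfl (fun hk => ?_) fun _ => rfl
    rw [Nat.cast_choose K hk]
    have : (N.factorial : K) ≠ 0 := Nat.cast_ne_zero.mpr N.factorial_ne_zero
    field_simp
  simp only [coeff_mk, map_sum, hcoeff, sum_div]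
  refine sum_congr_of_eq_on_inter (fun k _ hk => ?_) (fun k _ hk => ?_) fun k hk _ => ?_
  · rw [hT k (by simpa using hk), mul_zero, zero_div]
  · exact if_neg fun hle => hk (mem_range_succ_iff.mpr hle)
  · exact (if_pos (mem_range_succ_iff.mp hk)).symm

end RisingSeries

section BracketFunctional

open MvPolynomial Finset

lemma degree_eq_of_mem_support {σ R : Type*} [CommSemiring R] {P : MvPolynomial σ R} {n : ℕ}
    (hP : P.IsHomogeneous n) {m : σ →₀ ℕ} (hm : m ∈ P.support) : m.degree = n := by
  rw [Finsupp.degree_eq_weight_one]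
  exact hP (mem_support_iff.mp hm)

lemma linearMap_eq_of_isHomogeneous {σ R M : Type*} [CommSemiring R] [AddCommMonoid M]
    [Module R M] {L₁ L₂ : MvPolynomial σ R →ₗ[R] M} {n : ℕ}
    (h : ∀ m : σ →₀ ℕ, m.degree = n → L₁ (monomial m 1) = L₂ (monomial m 1))
    {P : MvPolynomial σ R} (hP : P.IsHomogeneous n) : L₁ P = L₂ P := by
  rw [P.as_sum, map_sum, map_sum]
  refine sum_congr rfl fun m hm => ?_
  rw [← mul_one (coeff m P), ← smul_eq_mul, ← smul_monomial, map_smul, map_smul,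
    h m (degree_eq_of_mem_support hP hm)]

lemma isHomogeneous_mkDerivation {σ R : Type*} [CommSemiring R] {f : σ → MvPolynomial σ R}
    (hf : ∀ i, (f i).IsHomogeneous 1) {n : ℕ} {P : MvPolynomial σ R} (hP : P.IsHomogeneous n) :
    (mkDerivation R f P).IsHomogeneous n := by
  rw [P.as_sum, map_sum]
  refine IsHomogeneous.sum _ _ _ fun m hm => ?_
  rw [mkDerivation_monomial, Finsupp.smul_sum]
  refine IsHomogeneous.sum _ _ _ fun i hi => ?_
  have hle : Finsupp.single i 1 ≤ m :=
    Finsupp.single_le_iff.mpr (Nat.one_le_iff_ne_zero.mpr (Finsupp.mem_support_iff.mp hi))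
  have hdeg : (m - Finsupp.single i 1).degree + 1 = n := by
    rw [← degree_eq_of_mem_support hP hm]
    conv_rhs => rw [← tsub_add_cancel_of_le hle, map_add, Finsupp.degree_single]
  beta_reduce
  rw [smul_eq_C_mul, smul_eq_mul, ← hdeg]
  exact ((isHomogeneous_monomial _ rfl).mul (hf i)).C_mul _

lemma card_toMultiset_eq_degree {σ : Type*} (m : σ →₀ ℕ) :
    Multiset.card (Finsupp.toMultiset m) = m.degree := by
  rw [Finsupp.card_toMultiset, Finsupp.degree_apply]
  rfl

lemma toMultiset_sub_single {σ : Type*} [DecidableEq σ] (m : σ →₀ ℕ) (i : σ) :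
    Finsupp.toMultiset (m - Finsupp.single i 1) = (Finsupp.toMultiset m).erase i := by
  ext j
  rcases eq_or_ne j i with rfl | h
  · simp
  · simp [Multiset.count_erase_of_ne h, Finsupp.count_toMultiset, h]

lemma toMultiset_single_add {σ : Type*} (m : σ →₀ ℕ) (i : σ) :
    Finsupp.toMultiset (Finsupp.single i 1 + m) = i ::ₘ Finsupp.toMultiset m := by
  rw [map_add, Finsupp.toMultiset_single, one_smul, Multiset.singleton_add]

/-- The linear functional sending the monomial `∏ X d` over `d ∈ m` to `B m`. -/
noncomputable def bracketFunctional (B : Multiset ℕ → ℚ) : MvPolynomial ℕ ℚ →ₗ[ℚ] ℚ :=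
  (basisMonomials ℕ ℚ).constr ℚ fun m => B (Finsupp.toMultiset m)

lemma bracketFunctional_monomial (B : Multiset ℕ → ℚ) (m : ℕ →₀ ℕ) (a : ℚ) :
    bracketFunctional B (monomial m a) = a * B (Finsupp.toMultiset m) := by
  have h : monomial m a = a • basisMonomials ℕ ℚ m := by
    rw [coe_basisMonomials, smul_monomial, smul_eq_mul, mul_one]
  rw [h, map_smul, bracketFunctional, Module.Basis.constr_basis, smul_eq_mul]

lemma bracketFunctional_X_mul_monomial (B : Multiset ℕ → ℚ) (d : ℕ) (m : ℕ →₀ ℕ) (a : ℚ) :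
    bracketFunctional B (X d * monomial m a) = a * B (d ::ₘ Finsupp.toMultiset m) := by
  rw [X, monomial_mul, one_mul, bracketFunctional_monomial, toMultiset_single_add]

/-- The derivation with `X (d + 1) ↦ X d` and `X 0 ↦ 0`: on a monomial it is the right-hand side of
the string relation. -/
noncomputable def lowering (R : Type*) [CommSemiring R] :
    Derivation R (MvPolynomial ℕ R) (MvPolynomial ℕ R) :=
  mkDerivation R fun d => if d = 0 then 0 else X (d - 1)

section Lowering

variable {R : Type*} [CommSemiring R]

lemma lowering_X_zero : lowering R (X 0) = 0 := by
  rw [lowering, mkDerivation_X, if_pos rfl]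

lemma lowering_X_succ (d : ℕ) : lowering R (X (d + 1)) = X d := by
  rw [lowering, mkDerivation_X, if_neg d.succ_ne_zero, Nat.add_sub_cancel]

lemma isHomogeneous_lowering {n : ℕ} {P : MvPolynomial ℕ R} (hP : P.IsHomogeneous n) :
    (lowering R P).IsHomogeneous n := by
  refine isHomogeneous_mkDerivation (fun d => ?_) hP
  split_ifs
  · exact isHomogeneous_zero ℕ R 1
  · exact isHomogeneous_X R (d - 1)

end Lowering

variable {g n : ℕ} {B : Multiset ℕ → ℚ}

lemma bracketFunctional_X_zero_mul
    (hstr : ∀ m : Multiset ℕ, Multiset.card m = n → StringRelAt B m)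
    {P : MvPolynomial ℕ ℚ} (hP : P.IsHomogeneous n) :
    bracketFunctional B (X 0 * P) = bracketFunctional B (lowering ℚ P) := by
  have hlinear := linearMap_eq_of_isHomogeneous
    (L₁ := bracketFunctional B ∘ₗ LinearMap.mulLeft ℚ (X 0))
    (L₂ := bracketFunctional B ∘ₗ (lowering ℚ : MvPolynomial ℕ ℚ →ₗ[ℚ] _)) (n := n) (P := P)
  simp only [LinearMap.comp_apply, LinearMap.mulLeft_apply, Derivation.coeFn_coe] at hlinear
  refine hlinear (fun m hm => ?_) hP
  rw [bracketFunctional_X_mul_monomial, hstr _ ((card_toMultiset_eq_degree m).trans hm), one_mul,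
    lowering, mkDerivation_monomial, one_smul, Finsupp.sum, map_sum, sum_multiset_map_count,
    Finsupp.toFinset_toMultiset]
  refine sum_congr rfl fun d _ => ?_
  rw [Finsupp.count_toMultiset]
  split_ifs
  · rw [smul_zero, smul_zero, map_zero]
  · rw [smul_eq_mul, mul_comm, bracketFunctional_X_mul_monomial, toMultiset_sub_single,
      nsmul_eq_mul]

lemma bracketFunctional_X_one_mul
    (hdil : ∀ m : Multiset ℕ, Multiset.card m = n → DilatonRelAt g B m)
    {P : MvPolynomial ℕ ℚ} (hP : P.IsHomogeneous n) :
    bracketFunctional B (X 1 * P) = (2 * g - 2 + n) * bracketFunctional B P := by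
  have hlinear := linearMap_eq_of_isHomogeneous
    (L₁ := bracketFunctional B ∘ₗ LinearMap.mulLeft ℚ (X 1))
    (L₂ := (2 * g - 2 + n : ℚ) • bracketFunctional B) (n := n) (P := P)
  simp only [LinearMap.comp_apply, LinearMap.mulLeft_apply, LinearMap.smul_apply, smul_eq_mul]
    at hlinear
  refine hlinear (fun m hm => ?_) hP
  have hcard := (card_toMultiset_eq_degree m).trans hm
  rw [bracketFunctional_X_mul_monomial, bracketFunctional_monomial, hdil _ hcard, hcard, one_mul,
    one_mul]

lemma bracketFunctional_X_one_pow_mul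
    (hdil : ∀ m : Multiset ℕ, n ≤ Multiset.card m → DilatonRelAt g B m)
    {P : MvPolynomial ℕ ℚ} (hP : P.IsHomogeneous n) (i : ℕ) :
    bracketFunctional B (X 1 ^ i * P) =
      (ascPochhammer ℚ i).eval (2 * g - 2 + n : ℚ) * bracketFunctional B P := by
  induction i with
  | zero => simp
  | succ i ih =>
    have hhom : (X 1 ^ i * P).IsHomogeneous (i + n) := by
      simpa using ((isHomogeneous_X ℚ 1).pow i).mul hP
    rw [pow_succ', mul_assoc, bracketFunctional_X_one_mul (fun m hm => hdil m (by omega)) hhom, ih,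
      ascPochhammer_succ_eval]
    push_cast
    ring

end BracketFunctional

section WeightIdeal

open MvPolynomial Finset

/-- The ideal of polynomials whose monomials all have weight at least `t`, where the variable
`X d` has weight `d`. -/
noncomputable def weightIdeal (R : Type*) [CommSemiring R] (t : ℕ) : Ideal (MvPolynomial ℕ R) :=
  restrictSupportIdeal R {m | t ≤ (Finsupp.toMultiset m).sum} fun m m' hle hm => by
    obtain ⟨k, rfl⟩ := exists_add_of_le hle
    rw [Set.mem_ofPred_eq, map_add, Multiset.sum_add]
    exact le_add_right hm

section

variable {R : Type*} [CommSemiring R] {t u : ℕ} {P Q : MvPolynomial ℕ R}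

lemma mem_weightIdeal_iff :
    P ∈ weightIdeal R t ↔ ∀ m ∈ P.support, t ≤ (Finsupp.toMultiset m).sum :=
  Iff.rfl

lemma X_mem_weightIdeal {d : ℕ} (h : t ≤ d) : (X d : MvPolynomial ℕ R) ∈ weightIdeal R t :=
  (monomial_mem_restrictSupport R).mpr (.inl (by simpa using h))

lemma mul_mem_weightIdeal (hP : P ∈ weightIdeal R t) (hQ : Q ∈ weightIdeal R u) :
    P * Q ∈ weightIdeal R (t + u) := by
  have hmul := Submodule.mul_mem_mul (show P ∈ restrictSupport R _ from hP)
    (show Q ∈ restrictSupport R _ from hQ)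
  rw [← restrictSupport_add] at hmul
  refine restrictSupport_mono R ?_ hmul
  rintro _ ⟨m, hm, m', hm', rfl⟩
  rw [Set.mem_ofPred_eq] at *
  simpa using add_le_add hm hm'

lemma pow_mem_weightIdeal (hP : P ∈ weightIdeal R t) (n : ℕ) :
    P ^ n ∈ weightIdeal R (n * t) := by
  induction n with
  | zero => exact mem_weightIdeal_iff.mpr fun m _ => by simp
  | succ n ih =>
    rw [pow_succ, Nat.succ_mul]
    exact mul_mem_weightIdeal ih hP

end

lemma bracketFunctional_eq_zero {g n t : ℕ} {B : Multiset ℕ → ℚ} (hdeg : NonnegDegree g B)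
    (ht : 3 * g + n < t + 3) {P : MvPolynomial ℕ ℚ} (hP : P.IsHomogeneous n)
    (hPt : P ∈ weightIdeal ℚ t) : bracketFunctional B P = 0 := by
  rw [P.as_sum, map_sum]
  refine sum_eq_zero fun m hm => ?_
  have hweight := mem_weightIdeal_iff.mp hPt m hm
  have hcard : Multiset.card (Finsupp.toMultiset m) = n :=
    (card_toMultiset_eq_degree m).trans (degree_eq_of_mem_support hP hm)
  rw [bracketFunctional_monomial, hdeg _ (by omega), mul_zero]

/-- `P` is an eigenvector of the lowering derivation with eigenvalue `α`, up to terms of weight at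
least `t`. -/
def IsLoweringEigen {R : Type*} [CommRing R] (t : ℕ) (α : R) (P : MvPolynomial ℕ R) : Prop :=
  lowering R P - α • P ∈ weightIdeal R t

namespace IsLoweringEigen

variable {R : Type*} [CommRing R] {t : ℕ} {α β : R} {P Q : MvPolynomial ℕ R}

lemma one : IsLoweringEigen t (0 : R) 1 := by
  simp [IsLoweringEigen]

lemma X_zero : IsLoweringEigen t (0 : R) (X 0) := by
  simp [IsLoweringEigen, lowering_X_zero]

lemma mul (hP : IsLoweringEigen t α P) (hQ : IsLoweringEigen t β Q) :
    IsLoweringEigen t (α + β) (P * Q) := by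
  have hleibniz : lowering R (P * Q) - (α + β) • (P * Q) =
      Q * (lowering R P - α • P) + P * (lowering R Q - β • Q) := by
    rw [Derivation.leibniz]
    simp only [smul_eq_C_mul, smul_eq_mul, map_add]
    ring
  rw [IsLoweringEigen, hleibniz]
  exact add_mem (Ideal.mul_mem_left _ _ hP) (Ideal.mul_mem_left _ _ hQ)

lemma prod {ι : Type*} (s : Finset ι) {α : ι → R} {P : ι → MvPolynomial ℕ R}
    (h : ∀ i ∈ s, IsLoweringEigen t (α i) (P i)) :
    IsLoweringEigen t (∑ i ∈ s, α i) (∏ i ∈ s, P i) := by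
  classical
  induction s using Finset.induction_on with
  | empty => simpa using one
  | insert i s hi ih =>
    rw [sum_insert hi, prod_insert hi]
    exact (h i (mem_insert_self _ _)).mul (ih fun j hj => h j (mem_insert_of_mem hj))

lemma pow (h : IsLoweringEigen t α P) (n : ℕ) : IsLoweringEigen t (n * α) (P ^ n) := by
  simpa using prod (range n) (α := fun _ => α) (P := fun _ => P) fun _ _ => h

end IsLoweringEigen

lemma bracketFunctional_X_zero_pow_mul {g n t : ℕ} {B : Multiset ℕ → ℚ} (hdeg : NonnegDegree g B)
    (hstr : ∀ m : Multiset ℕ, n ≤ Multiset.card m → StringRelAt B m)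
    {P : MvPolynomial ℕ ℚ} (hP : P.IsHomogeneous n) {α : ℚ} (hα : IsLoweringEigen t α P)
    (i : ℕ) (ht : 3 * g + (n + i) < t + 3) :
    bracketFunctional B (X 0 ^ i * P) = α ^ i * bracketFunctional B P := by
  induction i with
  | zero => simp
  | succ i ih =>
    have hhom : (X 0 ^ i * P).IsHomogeneous (i + n) := by
      simpa using ((isHomogeneous_X ℚ 0).pow i).mul hP
    have heigen : IsLoweringEigen t α (X 0 ^ i * P) := by
      simpa using (IsLoweringEigen.X_zero.pow i).mul hα
    have hlowering : bracketFunctional B (lowering ℚ (X 0 ^ i * P)) =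
        α * bracketFunctional B (X 0 ^ i * P) := by
      have hzero := bracketFunctional_eq_zero hdeg (by omega) ((isHomogeneous_lowering hhom).sub
        ((homogeneousSubmodule ℕ ℚ (i + n)).smul_mem α hhom)) heigen
      rwa [map_sub, map_smul, sub_eq_zero] at hzero
    rw [pow_succ', mul_assoc, bracketFunctional_X_zero_mul (fun m hm => hstr m (by omega)) hhom,
      hlowering, ih (by omega), pow_succ', mul_assoc]

end WeightIdeal

section Insertions

open MvPolynomial Finset

variable {R : Type*} [CommRing R]

/-- The truncated geometric insertion `Σ_{d < K} wᵈ X d`. -/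
noncomputable def insertion (K : ℕ) (w : R) : MvPolynomial ℕ R :=
  ∑ d ∈ range K, w ^ d • X d

lemma isHomogeneous_insertion (K : ℕ) (w : R) : (insertion K w).IsHomogeneous 1 :=
  IsHomogeneous.sum _ _ _ fun d _ =>
    (homogeneousSubmodule ℕ R 1).smul_mem (w ^ d) (isHomogeneous_X R d)

lemma lowering_insertion_succ (K : ℕ) (w : R) :
    lowering R (insertion (K + 1) w) = w • insertion K w := by
  rw [insertion, insertion, map_sum, sum_range_succ', smul_sum]
  simp only [Derivation.map_smul, lowering_X_zero, lowering_X_succ, smul_zero, add_zero, smul_smul,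
    pow_succ']

lemma isLoweringEigen_insertion (K : ℕ) (w : R) :
    IsLoweringEigen K w (insertion (K + 1) w) := by
  have hlast : lowering R (insertion (K + 1) w) - w • insertion (K + 1) w =
      C (-w ^ (K + 1)) * X K := by
    rw [lowering_insertion_succ, insertion, insertion, sum_range_succ, smul_add, smul_smul,
      ← pow_succ', sub_add_cancel_left, map_neg, neg_mul, smul_eq_C_mul]
  rw [IsLoweringEigen, hlast]
  exact Ideal.mul_mem_left _ _ (X_mem_weightIdeal le_rfl)

lemma insertion_sub_insertion_mem_weightIdeal {K K' : ℕ} (h : K ≤ K') (w : R) :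
    insertion K' w - insertion K w ∈ weightIdeal R K := by
  obtain ⟨j, rfl⟩ := Nat.exists_eq_add_of_le h
  rw [insertion, insertion, sum_range_add, add_sub_cancel_left]
  refine sum_mem fun d _ => ?_
  rw [smul_eq_C_mul]
  exact Ideal.mul_mem_left _ _ (X_mem_weightIdeal (Nat.le_add_right K d))

/-- The insertion `Σ_{2 ≤ d < K} X d` left over after the string and dilaton relations have removed
`X 0` and `X 1`. -/
noncomputable def reducedInsertion (R : Type*) [CommRing R] (K : ℕ) : MvPolynomial ℕ R :=
  insertion K 1 - X 0 - X 1

lemma isHomogeneous_reducedInsertion (K : ℕ) : (reducedInsertion R K).IsHomogeneous 1 :=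
  ((isHomogeneous_insertion K 1).sub (isHomogeneous_X R 0)).sub (isHomogeneous_X R 1)

lemma reducedInsertion_mem_weightIdeal {K : ℕ} (hK : 2 ≤ K) :
    reducedInsertion R K ∈ weightIdeal R 2 := by
  obtain ⟨K, rfl⟩ := Nat.exists_eq_add_of_le' hK
  have htail : reducedInsertion R (K + 2) = ∑ d ∈ range K, X (d + 2) := by
    rw [reducedInsertion, insertion, sum_range_succ', sum_range_succ']
    simp only [one_pow, one_smul, zero_add, add_sub_cancel_right]
  rw [htail]
  exact sum_mem fun d _ => X_mem_weightIdeal (Nat.le_add_left 2 d)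

/-- The product of the insertions at the marked points `0, …, p - 1`, with parameters `b`. -/
noncomputable def markedInsertions (p : ℕ) (b : ℕ → R) (K : ℕ) : MvPolynomial ℕ R :=
  ∏ i ∈ range p, insertion K (b i)

lemma isHomogeneous_markedInsertions (p : ℕ) (b : ℕ → R) (K : ℕ) :
    (markedInsertions p b K).IsHomogeneous p := by
  simpa [markedInsertions] using IsHomogeneous.prod (range p) (fun i => insertion K (b i))
    (fun _ => 1) fun i _ => isHomogeneous_insertion K (b i)

lemma isLoweringEigen_markedInsertions (p : ℕ) (b : ℕ → R) (K : ℕ) :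
    IsLoweringEigen K (∑ i ∈ range p, b i) (markedInsertions p b (K + 1)) :=
  .prod _ fun i _ => isLoweringEigen_insertion K (b i)

lemma reducedInsertion_pow_mul_markedInsertions_sub_mem {K K' : ℕ} (h : K ≤ K') (p : ℕ)
    (b : ℕ → R) (k : ℕ) :
    reducedInsertion R K' ^ k * markedInsertions p b K' -
      reducedInsertion R K ^ k * markedInsertions p b K ∈ weightIdeal R K := by
  have hinsertion (w : R) : Ideal.Quotient.mk (weightIdeal R K) (insertion K' w) =
      Ideal.Quotient.mk (weightIdeal R K) (insertion K w) :=
    Ideal.Quotient.eq.mpr (insertion_sub_insertion_mem_weightIdeal h w)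
  rw [← Ideal.Quotient.eq]
  simp only [reducedInsertion, markedInsertions, map_mul, map_pow, map_sub, map_prod, hinsertion]

end Insertions

section Moments

open MvPolynomial Finset

lemma map_add_smul_pow_mul {R A M : Type*} [CommSemiring R] [CommSemiring A] [Algebra R A]
    [AddCommMonoid M] [Module R M] (L : A →ₗ[R] M) (x y s : A) (c : R) (N : ℕ) :
    L ((x + c • y) ^ N * s) =
      ∑ k ∈ range (N + 1), (c ^ (N - k) * N.choose k) • L (y ^ (N - k) * (x ^ k * s)) := by
  rw [add_pow, sum_mul, map_sum]
  refine sum_congr rfl fun k _ => ?_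
  rw [← map_smul]
  congr 1
  simp only [Algebra.smul_def, map_mul, map_pow, map_natCast, mul_pow]
  ring

variable {g p : ℕ} {B : Multiset ℕ → ℚ}

lemma bracketFunctional_sub_X_zero_pow_mul (hdeg : NonnegDegree g B)
    (hstr : ∀ m : Multiset ℕ, p ≤ Multiset.card m → StringRelAt B m)
    {f s : MvPolynomial ℕ ℚ} (hf : f.IsHomogeneous 1) (hs : s.IsHomogeneous p) {t : ℕ} {β : ℚ}
    (hft : IsLoweringEigen t 1 f) (hst : IsLoweringEigen t β s) {N : ℕ}
    (ht : 3 * g + (p + N) < t + 3) :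
    bracketFunctional B ((f - X 0) ^ N * s) =
      ∑ k ∈ range (N + 1),
        (-((k : ℚ) + β)) ^ (N - k) * N.choose k * bracketFunctional B (f ^ k * s) := by
  rw [sub_eq_add_neg, ← neg_one_smul ℚ, map_add_smul_pow_mul]
  refine sum_congr rfl fun k hk => ?_
  have hkN : k ≤ N := mem_range_succ_iff.mp hk
  have hhom : (f ^ k * s).IsHomogeneous (k + p) := by
    simpa using (hf.pow k).mul hs
  have heigen : IsLoweringEigen t (k + β) (f ^ k * s) := by
    simpa using (hft.pow k).mul hst
  rw [bracketFunctional_X_zero_pow_mul hdeg (fun m hm => hstr m (by omega)) hhom heigen _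
    (by omega), smul_eq_mul, neg_pow ((k : ℚ) + β)]
  ring

lemma bracketFunctional_pow_mul_eq_sum_sub_X_one
    (hdil : ∀ m : Multiset ℕ, p ≤ Multiset.card m → DilatonRelAt g B m)
    {f s : MvPolynomial ℕ ℚ} (hf : f.IsHomogeneous 1) (hs : s.IsHomogeneous p) (N : ℕ) :
    bracketFunctional B (f ^ N * s) =
      ∑ k ∈ range (N + 1), (ascPochhammer ℚ (N - k)).eval (2 * g - 2 + p + k : ℚ) * N.choose k *
        bracketFunctional B ((f - X 1) ^ k * s) := by
  conv_lhs => rw [← sub_add_cancel f (X 1), ← one_smul ℚ (X 1 : MvPolynomial ℕ ℚ),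
    map_add_smul_pow_mul]
  refine sum_congr rfl fun k _ => ?_
  have hhom : ((f - X 1) ^ k * s).IsHomogeneous (k + p) := by
    simpa using ((hf.sub (isHomogeneous_X ℚ 1)).pow k).mul hs
  rw [one_smul, bracketFunctional_X_one_pow_mul (fun m hm => hdil m (by omega)) hhom, one_pow,
    one_mul, smul_eq_mul, Nat.cast_add, add_comm (k : ℚ), ← add_assoc]
  ring

/-- The sum of `w₀^{d₀} ⋯ w_{n-1}^{d_{n-1}} B({d₀, …, d_{n-1}})` over the tuples with
`Σ dᵢ ≤ 3g - 3 + n`. For `g = 0` the subtraction truncates, which only adds tuples at which a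
bracket of nonnegative degree vanishes. -/
noncomputable def tupleSum (g : ℕ) (B : Multiset ℕ → ℚ) (w : ℕ → ℚ) (n : ℕ) : ℚ :=
  ∑ d ∈ (Fintype.piFinset fun _ : Fin n => range (3 * g - 3 + n + 1)).filter
      (fun d => ∑ i, d i ≤ 3 * g - 3 + n),
    (∏ i : Fin n, w i ^ d i) * B (List.ofFn d : Multiset ℕ)

lemma bracketFunctional_prod_smul_X (B : Multiset ℕ → ℚ) {n : ℕ} (c : Fin n → ℚ) (d : Fin n → ℕ) :
    bracketFunctional B (∏ i, c i • X (d i)) = (∏ i, c i) * B (List.ofFn d : Multiset ℕ) := by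
  have hmonomial : ∏ i, (X (d i) : MvPolynomial ℕ ℚ) =
      monomial (∑ i, Finsupp.single (d i) 1) 1 := by
    rw [monomial_sum_one]
    rfl
  have hmultiset : Finsupp.toMultiset (∑ i, Finsupp.single (d i) 1) =
      (List.ofFn d : Multiset ℕ) := by
    simp only [map_sum, Finsupp.toMultiset_single, one_smul]
    rw [← Fin.univ_val_map, ← Multiset.sum_map_singleton (Multiset.map d _), Multiset.map_map]
    rfl
  rw [prod_smul, map_smul, smul_eq_mul, hmonomial, bracketFunctional_monomial, hmultiset, one_mul]

lemma bracketFunctional_prod_insertion (hdeg : NonnegDegree g B) (w : ℕ → ℚ) {n K : ℕ}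
    (hK : 3 * g - 3 + n < K) :
    bracketFunctional B (∏ i ∈ range n, insertion K (w i)) = tupleSum g B w n := by
  rw [← Fin.prod_univ_eq_prod_range (fun i => insertion K (w i)) n]
  simp only [insertion]
  rw [prod_univ_sum, map_sum, tupleSum]
  simp only [bracketFunctional_prod_smul_X]
  refine (sum_subset (fun d hd => ?_) fun d _ hd => ?_).symm
  · rw [mem_filter, Fintype.mem_piFinset] at hd
    exact Fintype.mem_piFinset.mpr fun i => mem_range.mpr ((mem_range.mp (hd.1 i)).trans_le hK)
  · have hsum : 3 * g - 3 + n < ∑ i, d i := by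
      by_contra! hle
      refine hd (mem_filter.mpr ⟨Fintype.mem_piFinset.mpr fun i => mem_range_succ_iff.mpr ?_, hle⟩)
      exact (single_le_sum (fun _ _ => Nat.zero_le _) (mem_univ i)).trans hle
    rw [hdeg, mul_zero]
    rw [Multiset.coe_card, List.length_ofFn, Multiset.sum_coe, List.sum_ofFn]
    omega

lemma bracketFunctional_insertion_pow_mul_markedInsertions (hdeg : NonnegDegree g B) (b : ℕ → ℚ)
    {k K : ℕ} (hK : 3 * g - 3 + (p + k) < K) :
    bracketFunctional B (insertion K 1 ^ k * markedInsertions p b K) =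
      tupleSum g B (fun i => if i < p then b i else 1) (p + k) := by
  rw [← bracketFunctional_prod_insertion hdeg _ hK, prod_range_add, mul_comm, markedInsertions]
  congr 2
  · exact prod_congr rfl fun i hi => by rw [if_pos (mem_range.mp hi)]
  · simp

/-- The `k`-th moment of a bracket with all insertions of `X 0` and `X 1` removed. The truncation
level is large enough for the value not to depend on it. -/
noncomputable def reducedMoment (g : ℕ) (B : Multiset ℕ → ℚ) (p : ℕ) (b : ℕ → ℚ) (k : ℕ) : ℚ :=
  bracketFunctional B (reducedInsertion ℚ (3 * g + (p + k) + 2) ^ k *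
    markedInsertions p b (3 * g + (p + k) + 2))

lemma isHomogeneous_reducedInsertion_pow_mul_markedInsertions (b : ℕ → ℚ) (k K : ℕ) :
    (reducedInsertion ℚ K ^ k * markedInsertions p b K).IsHomogeneous (p + k) := by
  simpa [add_comm] using
    ((isHomogeneous_reducedInsertion K).pow k).mul (isHomogeneous_markedInsertions p b K)

lemma bracketFunctional_eq_reducedMoment (hdeg : NonnegDegree g B) (b : ℕ → ℚ) {k K : ℕ}
    (hK : 3 * g + (p + k) + 2 ≤ K) :
    bracketFunctional B (reducedInsertion ℚ K ^ k * markedInsertions p b K) =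
      reducedMoment g B p b k := by
  rw [reducedMoment, ← sub_eq_zero, ← map_sub]
  exact bracketFunctional_eq_zero hdeg (by omega)
    ((isHomogeneous_reducedInsertion_pow_mul_markedInsertions b k _).sub
      (isHomogeneous_reducedInsertion_pow_mul_markedInsertions b k _))
    (reducedInsertion_pow_mul_markedInsertions_sub_mem hK p b k)

lemma reducedMoment_eq_zero (hdeg : NonnegDegree g B) (b : ℕ → ℚ) {k : ℕ} (hk : 3 * g + p ≤ k) :
    reducedMoment g B p b k = 0 :=
  bracketFunctional_eq_zero hdeg (t := k * 2) (by omega)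
    (isHomogeneous_reducedInsertion_pow_mul_markedInsertions b k _)
    (Ideal.mul_mem_right _ _
      (pow_mem_weightIdeal (reducedInsertion_mem_weightIdeal (by omega)) k))

/-- The string relation evaluates the left-hand side, and the dilaton relation the right-hand side,
to the `N`-th moment with only the insertions of `X 0` removed. -/
theorem sum_tupleSum_eq_sum_reducedMoment (hdeg : NonnegDegree g B)
    (hstr : ∀ m : Multiset ℕ, p ≤ Multiset.card m → StringRelAt B m)
    (hdil : ∀ m : Multiset ℕ, p ≤ Multiset.card m → DilatonRelAt g B m) (b : ℕ → ℚ) (N : ℕ) :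
    ∑ k ∈ range (N + 1), (-((k : ℚ) + ∑ i ∈ range p, b i)) ^ (N - k) * N.choose k *
        tupleSum g B (fun i => if i < p then b i else 1) (p + k) =
      ∑ k ∈ range (N + 1), (ascPochhammer ℚ (N - k)).eval (2 * g - 2 + p + k : ℚ) * N.choose k *
        reducedMoment g B p b k := by
  let K := 3 * g + (p + N) + 1
  have hf := isHomogeneous_insertion (K + 1) (1 : ℚ)
  have hs := isHomogeneous_markedInsertions p b (K + 1)
  calc
    _ = bracketFunctional B ((insertion (K + 1) 1 - X 0) ^ N * markedInsertions p b (K + 1)) := by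
      rw [bracketFunctional_sub_X_zero_pow_mul hdeg hstr hf hs (isLoweringEigen_insertion K 1)
        (isLoweringEigen_markedInsertions p b K) (by omega)]
      refine sum_congr rfl fun k hk => ?_
      have hkN := mem_range_succ_iff.mp hk
      rw [bracketFunctional_insertion_pow_mul_markedInsertions hdeg b (by omega)]
    _ = _ := by
      rw [bracketFunctional_pow_mul_eq_sum_sub_X_one hdil (hf.sub (isHomogeneous_X ℚ 0)) hs]
      refine sum_congr rfl fun k hk => ?_
      have hkN := mem_range_succ_iff.mp hk
      rw [← reducedInsertion, bracketFunctional_eq_reducedMoment hdeg b (by omega)]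

end Moments

section Assembly

open PowerSeries
open Finset hiding mk

lemma mk_ite_lt_eq_X_pow_mul_mk {R : Type*} [Semiring R] (β : ℕ) (f : ℕ → R) :
    (mk fun n => if n < β then 0 else f (n - β)) = X ^ β * mk f := by
  ext n
  simp only [coeff_mk, coeff_X_pow_mul', ← not_lt, ite_not]

theorem X_pow_mul_mk_tupleSum_mem_adjoin {g p : ℕ} {B : Multiset ℕ → ℚ} (hdeg : NonnegDegree g B)
    (hstr : ∀ m : Multiset ℕ, p ≤ Multiset.card m → StringRelAt B m)
    (hdil : ∀ m : Multiset ℕ, p ≤ Multiset.card m → DilatonRelAt g B m) {b : ℕ → ℚ} {β : ℕ}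
    (hβ : (β : ℚ) = ∑ i ∈ range p, b i) :
    (X ^ β * mk fun k => tupleSum g B (fun i => if i < p then b i else 1) (p + k) / k.factorial) ∈
      Algebra.adjoin ℚ {Yq, Zq} := by
  have hX : (X : PowerSeries ℚ) ∈ Algebra.adjoin ℚ {(X : PowerSeries ℚ), mk 1} :=
    Algebra.subset_adjoin (by simp)
  have hrising (k : ℕ) : risingSeries (2 * g - 2 + p + k : ℚ) ∈
      Algebra.adjoin ℚ {(X : PowerSeries ℚ), mk 1} := by
    exact_mod_cast risingSeries_intCast_mem_adjoin (K := ℚ) (2 * g - 2 + p + k)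
  rw [mem_adjoin_Yq_Zq_iff, subst_mulExpNeg_X_pow_mul_mk, hβ]
  simp only [sum_tupleSum_eq_sum_reducedMoment hdeg hstr hdil b]
  rw [mk_sum_ascPochhammer_eq_sum_risingSeries _ fun k hk => reducedMoment_eq_zero hdeg b hk]
  exact mul_mem (pow_mem hX β) <| sum_mem fun k _ =>
    Subalgebra.smul_mem _ (mul_mem (pow_mem hX k) (hrising k)) _

end Assembly

end BracketSeries

theorem bracket_series_mem_adjoin_general_general (g p : ℕ) (B : Multiset ℕ → ℚ)
    (hdeg : NonnegDegree g B)
    (hstr : ∀ m : Multiset ℕ, p ≤ Multiset.card m → StringRelAt B m)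
    (hdil : ∀ m : Multiset ℕ, p ≤ Multiset.card m → DilatonRelAt g B m)
    (b : ℕ → ℚ) (r : ℕ) (hr : (r : ℚ) = ∑ i ∈ Finset.range p, (b i - 1)) :
    (PowerSeries.mk fun n =>
        if n < p + r then 0 else
        (1 / ((n - p - r).factorial : ℚ)) *
          ∑ d ∈ (Fintype.piFinset fun _ : Fin (n - r) =>
              Finset.range (3 * g - 3 + (n - r) + 1)).filter
              (fun d => ∑ i, d i ≤ 3 * g - 3 + (n - r)),
            (∏ i : Fin (n - r), (if (i : ℕ) < p then b i else 1) ^ d i) *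
              B (List.ofFn d : Multiset ℕ)) ∈
      Algebra.adjoin ℚ {Yq, Zq} := by
  have hβ : ((p + r : ℕ) : ℚ) = ∑ i ∈ Finset.range p, b i := by
    simp [hr]
  convert BracketSeries.X_pow_mul_mk_tupleSum_mem_adjoin hdeg hstr hdil hβ using 1
  rw [← BracketSeries.mk_ite_lt_eq_X_pow_mul_mk]
  refine congrArg PowerSeries.mk (funext fun n => ite_congr rfl (fun _ => rfl) fun hn => ?_)
  rw [Nat.sub_sub, show n - r = p + (n - (p + r)) by omega, one_div_mul_eq_div,
    BracketSeries.tupleSum]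

/-- Let `g ≥ 2`, `p ≥ 0`, and let `B` be a genus-`g` bracket of nonnegative degree
satisfying the string and dilaton relations at every multiset of cardinality `≥ p`.
Let `b₁, …, b_p` be positive integers and `r = Σ (bᵢ − 1)`.  Then
`F(q) = Σ_{n ≥ p+r} (qⁿ/(n−p−r)!) Σ_{(d₁,…,d_{n−r}) ∈ ℕ^{n−r}, Σdᵢ ≤ 3g−3+(n−r)}
  b₁^{d₁} ⋯ b_p^{d_p} · B({d₁,…,d_{n−r}})`
lies in `𝒜 = ℚ[Y,Z]`.  (The factor `b₁^{d₁}⋯b_p^{d_p}` is encoded as the product over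
all `i < n−r` of `bᵢ^{dᵢ}` for `i < p` and `1^{dᵢ}` otherwise, which agrees with it
since `p ≤ n−r` for all `n ≥ p+r`.) -/
theorem bracket_series_mem_adjoin_general (g : ℕ) (hg : 2 ≤ g) (p : ℕ)
    (B : Multiset ℕ → ℚ) (hdeg : NonnegDegree g B)
    (hstr : ∀ m : Multiset ℕ, p ≤ Multiset.card m → StringRelAt B m)
    (hdil : ∀ m : Multiset ℕ, p ≤ Multiset.card m → DilatonRelAt g B m)
    (b : ℕ → ℕ) (hb : ∀ i < p, 0 < b i) (r : ℕ)
    (hr : r = ∑ i ∈ Finset.range p, (b i - 1)) :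
    (PowerSeries.mk fun n =>
        if n < p + r then 0 else
        (1 / ((n - p - r).factorial : ℚ)) *
          ∑ d ∈ (Fintype.piFinset fun _ : Fin (n - r) =>
              Finset.range (3 * g - 3 + (n - r) + 1)).filter
              (fun d => ∑ i, d i ≤ 3 * g - 3 + (n - r)),
            (∏ i : Fin (n - r), (if (i : ℕ) < p then (b i : ℚ) else 1) ^ d i) *
              B (List.ofFn d : Multiset ℕ)) ∈
      Algebra.adjoin ℚ {Yq, Zq} := by
  have hcast : (r : ℚ) = ∑ i ∈ Finset.range p, ((b i : ℚ) - 1) := by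
    rw [hr, Nat.cast_sum]
    exact Finset.sum_congr rfl fun i hi => Nat.cast_pred (hb i (Finset.mem_range.mp hi))
  exact bracket_series_mem_adjoin_general_general g p B hdeg hstr hdil (fun i => b i) r hcast
end

section
/- The algebra 𝒜 is spanned over ℚ, as a ℚ-vector space, by the power series 1, the series Σ_{n≥1} (n^{n+k}/n!) q^n for all integers k ∈ ℤ (where n^{n+k} is the rational number n^{n+k}, well defined since n ≥ 1), and the series Σ_{n≥1} (n^k A_n/n!) q^n for all natural numbers k ∈ ℕ. That is, 𝒜 equals the ℚ-linear span of this set of power series. -/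
/-- `Aₙ = Σ_{p+s=n, p,s ≥ 1} (n!/(p!·s!)) pᵖ sˢ`, as a rational number. -/
noncomputable def Aseq (n : ℕ) : ℚ :=
  ∑ p ∈ Finset.Ioo 0 n,
    (n.factorial : ℚ) / (p.factorial * (n - p).factorial) * p ^ p * (n - p) ^ (n - p)

/-!
Put `θ = q d/dq`. Abel's identity gives `Y (1 + Z) = Z`, that is `Y Z = Z - Y`, so every monomial
`Yⁱ Zʲ` splits into pure powers and `𝒜` is spanned by the powers of `Y` and the powers of `Z`.

Since `θ Y = Z`, differentiating `Y (1 + Z) = Z` yields `θ Z = (1 + Z)² Z`, so `θ (Zᵐ)` is `m Zᵐ⁺²`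
plus lower powers of `Z`. Hence all powers of `Z` are produced from `Z` and `Z²` by `θ`, and these
two have the `θ`-orbits `∑ n^(n+k)/n! qⁿ` and `∑ n^k Aₙ/n! qⁿ` with `k ≥ 0`. In the other direction,
`θ⁻¹` of a positive power `Yᵐ` is a combination of `Yᵐ` and `Yᵐ⁺¹` with a nonzero coefficient at
`Yᵐ⁺¹`, so the positive powers of `Y` have the same span as the `θ⁻¹`-orbit of `Y`, which consists
of the series `∑ n^(n+k)/n! qⁿ` with `k < 0`.
-/

open PowerSeries Finset

section Abel

lemma choose_mul_choose_sub_comm (n a b : ℕ) :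
    n.choose a * (n - a).choose b = n.choose b * (n - b).choose a := by
  have ha := Nat.choose_mul (n := n) (Nat.le_add_right a b)
  have hb := Nat.choose_mul (n := n) (Nat.le_add_left b a)
  rw [Nat.add_sub_cancel_left] at ha
  rw [Nat.add_sub_cancel] at hb
  rw [← ha, ← hb, Nat.choose_symm_add]

variable {R : Type*} [CommRing R]

lemma sum_choose_mul_pow_mul_neg_pow (m : ℕ) :
    ∑ i ∈ range (m + 1), ((m + 1).choose (i + 1) : R) *
      ((i + 1 : R) ^ i * (-(i + 1 : R)) ^ (m - i)) = if m = 0 then 1 else 0 := by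
  rcases eq_or_ne m 0 with rfl | hm
  · simp
  have hdiff := congrFun (fwdDiff_iter_pow_eq_zero_of_lt (R := R) m.lt_succ_self) 0
  rw [fwdDiff_iter_eq_sum_shift, sum_range_succ'] at hdiff
  simp only [Nat.succ_eq_add_one, Nat.reduceSubDiff, zero_add, nsmul_eq_mul, mul_one, zsmul_eq_mul,
    Nat.cast_zero, zero_pow hm, mul_zero, add_zero, Pi.zero_apply] at hdiff
  rw [if_neg hm, ← hdiff]
  refine sum_congr rfl fun i hi => ?_
  have hpow : (i + 1 : R) ^ m = (i + 1) ^ i * (i + 1) ^ (m - i) := by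
    rw [← pow_add, Nat.add_sub_cancel' (mem_range_succ_iff.1 hi)]
  push_cast
  rw [hpow, neg_pow]
  ring

-- In the expansion in powers of `x`, the coefficients below the leading one are iterated finite
-- differences of monomials of too low degree.
theorem abel_sum_choose_mul_pow_mul_sub_pow (x : R) (n : ℕ) :
    ∑ i ∈ range (n + 1), ((n + 1).choose (i + 1) : R) *
      ((i + 1 : R) ^ i * (x - (i + 1)) ^ (n - i)) = (n + 1) * x ^ n := by
  let c (a i : ℕ) : R := ((n + 1).choose a : R) * x ^ a *
    (((n - a + 1).choose (i + 1) : R) * ((i + 1 : R) ^ i * (-(i + 1 : R)) ^ (n - a - i)))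
  calc
    _ = ∑ i ∈ range (n + 1), ∑ a ∈ range (n - i + 1), c a i := by
      refine sum_congr rfl fun i hi => ?_
      rw [sub_eq_add_neg, add_pow x, mul_sum, mul_sum]
      refine sum_congr rfl fun a ha => ?_
      have hchoose : ((n + 1).choose (i + 1) : R) * (n - i).choose a =
          (n + 1).choose a * (n - a + 1).choose (i + 1) := by
        have h := choose_mul_choose_sub_comm (n + 1) (i + 1) a
        rw [Nat.add_sub_add_right, Nat.sub_add_comm (by grind)] at h
        exact_mod_cast congrArg (Nat.cast (R := R)) h
      rw [Nat.sub_right_comm n i a]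
      linear_combination x ^ a * (i + 1 : R) ^ i * (-(i + 1 : R)) ^ (n - a - i) * hchoose
    _ = ∑ a ∈ range (n + 1), ∑ i ∈ range (n - a + 1), c a i :=
      sum_comm' fun i a => by grind
    _ = ∑ a ∈ range (n + 1), ((n + 1).choose a : R) * x ^ a * if n - a = 0 then 1 else 0 := by
      simp_rw [c, ← mul_sum, sum_choose_mul_pow_mul_neg_pow]
    _ = (n + 1) * x ^ n := by
      rw [sum_range_succ, sum_eq_zero fun a ha => ?_]
      · simp
      · rw [if_neg (Nat.sub_ne_zero_of_lt (mem_range.1 ha)), mul_zero]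

end Abel

section Euler

/-- The Euler operator `θ = X d/dX` on formal power series. -/
noncomputable def eulerDerivation (R : Type*) [CommSemiring R] : Derivation R R⟦X⟧ R⟦X⟧ :=
  (X : R⟦X⟧) • derivative R

lemma coeff_eulerDerivation {R : Type*} [CommSemiring R] (n : ℕ) (f : R⟦X⟧) :
    coeff n (eulerDerivation R f) = n * coeff n f := by
  change coeff n (X * derivative R f) = _
  cases n with
  | zero => simp
  | succ n => rw [coeff_succ_X_mul, coeff_derivative, mul_comm, Nat.cast_succ]

/-- The inverse of the Euler operator on power series without constant term, extended linearly to
all power series by ignoring the constant term (the division by `n = 0` gives `0`). -/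
noncomputable def eulerPrimitive (K : Type*) [Semifield K] : K⟦X⟧ →ₗ[K] K⟦X⟧ where
  toFun f := mk fun n => coeff n f / n
  map_add' f g := by ext n; simp [add_div]
  map_smul' c f := by ext n; simp [mul_div_assoc]

lemma coeff_eulerPrimitive {K : Type*} [Semifield K] (n : ℕ) (f : K⟦X⟧) :
    coeff n (eulerPrimitive K f) = coeff n f / n := by
  simp [eulerPrimitive]

lemma eulerPrimitive_eulerDerivation {K : Type*} [Semifield K] [CharZero K] {f : K⟦X⟧}
    (hf : constantCoeff f = 0) : eulerPrimitive K (eulerDerivation K f) = f := by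
  ext n
  rw [coeff_eulerPrimitive, coeff_eulerDerivation]
  rcases eq_or_ne n 0 with rfl | hn
  · simp [hf]
  · exact mul_div_cancel_left₀ _ (Nat.cast_ne_zero.2 hn)

end Euler

section Algebra

lemma derivation_mem_adjoin {R A : Type*} [CommSemiring R] [CommSemiring A] [Algebra R A]
    (D : Derivation R A A) {s : Set A}
    (hs : ∀ a ∈ s, D a ∈ Algebra.adjoin R s) {a : A} (ha : a ∈ Algebra.adjoin R s) :
    D a ∈ Algebra.adjoin R s := by
  induction ha using Algebra.adjoin_induction with
  | mem a ha => exact hs a ha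
  | algebraMap r => rw [D.map_algebraMap]; exact zero_mem _
  | add a b _ _ iha ihb => rw [map_add]; exact add_mem iha ihb
  | mul a b ha hb iha ihb => rw [D.leibniz]; exact add_mem (mul_mem ha ihb) (mul_mem hb iha)

variable {R A : Type*} [CommRing R] [CommRing A] [Algebra R A] {y z : A}

lemma pow_mul_pow_mem_span_pow_union_pow (h : y * z = z - y) (m n : ℕ) :
    y ^ m * z ^ n ∈ Submodule.span R (Set.range (y ^ · : ℕ → A) ∪ Set.range (z ^ · : ℕ → A)) := by
  induction m generalizing n with
  | zero => exact Submodule.subset_span (.inr ⟨n, by simp⟩)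
  | succ m ihm =>
    induction n with
    | zero => exact Submodule.subset_span (.inl ⟨m + 1, by simp⟩)
    | succ n ihn =>
      have hsplit : y ^ (m + 1) * z ^ (n + 1) = y ^ m * z ^ (n + 1) - y ^ (m + 1) * z ^ n := by
        linear_combination y ^ m * z ^ n * h
      rw [hsplit]
      exact sub_mem (ihm (n + 1)) ihn

theorem adjoin_pair_eq_span_pow_union_pow (h : y * z = z - y) :
    Subalgebra.toSubmodule (Algebra.adjoin R {y, z}) =
      Submodule.span R (Set.range (y ^ · : ℕ → A) ∪ Set.range (z ^ · : ℕ → A)) := by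
  rw [Algebra.adjoin_eq_span]
  refine le_antisymm (Submodule.span_le.2 fun a ha => ?_) (Submodule.span_mono ?_)
  · obtain ⟨m, n, rfl⟩ := (Submonoid.mem_closure_pair _ _ _).1 ha
    exact pow_mul_pow_mem_span_pow_union_pow h m n
  · rintro _ (⟨m, rfl⟩ | ⟨n, rfl⟩)
    · exact pow_mem (Submonoid.subset_closure (by simp)) m
    · exact pow_mem (Submonoid.subset_closure (by simp)) n

lemma pow_succ_mem_of_derivation_mem {K : Type*} [Field K] [CharZero K] [Algebra K A]
    {D : Derivation K A A} (hz : D z = (1 + z) ^ 2 * z) {N : Submodule K A}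
    (hD : ∀ a ∈ N, D a ∈ N) (h₁ : z ∈ N) (h₂ : z ^ 2 ∈ N) (m : ℕ) : z ^ (m + 1) ∈ N := by
  induction m using Nat.twoStepInduction with
  | zero => simpa using h₁
  | one => exact h₂
  | more m ih₁ ih₂ =>
    have hDpow : D (z ^ (m + 1)) =
        ((m + 1 : ℕ) : K) • (z ^ (m + 1) + (2 : K) • z ^ (m + 2) + z ^ (m + 3)) := by
      rw [D.leibniz_pow, hz, Nat.cast_smul_eq_nsmul, ofNat_smul_eq_nsmul, Nat.add_sub_cancel]
      congr 1
      simp only [smul_eq_mul, nsmul_eq_mul]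
      push_cast
      ring
    have hpow : z ^ (m + 3) = ((m + 1 : ℕ) : K)⁻¹ • D (z ^ (m + 1)) -
        (z ^ (m + 1) + (2 : K) • z ^ (m + 2)) := by
      rw [hDpow, inv_smul_smul₀ (Nat.cast_ne_zero.2 m.succ_ne_zero), add_sub_cancel_left]
    rw [hpow]
    exact sub_mem (N.smul_mem _ (hD _ ih₁)) (add_mem ih₁ (N.smul_mem _ ih₂))

end Algebra

section Series

/-- The series `∑_{n ≥ 1} n^(n+k)/n! qⁿ`, which is `θᵏ Z` for the Euler operator `θ`; for `k = -1`
it is the exponential generating function `Y` of rooted labelled trees. -/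
noncomputable def treeSeries (k : ℤ) : ℚ⟦X⟧ :=
  mk fun n => if n = 0 then 0 else (n : ℚ) ^ ((n : ℤ) + k) / n.factorial

/-- The series `∑_{n ≥ 1} n^k Aₙ/n! qⁿ`, which is `θᵏ (Z²)` for the Euler operator `θ`. -/
noncomputable def treeConvSeries (k : ℕ) : ℚ⟦X⟧ :=
  mk fun n => if n = 0 then 0 else (n : ℚ) ^ k * Aseq n / n.factorial

lemma constantCoeff_treeSeries (k : ℤ) : constantCoeff (treeSeries k) = 0 := by
  simp [treeSeries, ← coeff_zero_eq_constantCoeff_apply]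

lemma treeSeries_zero : treeSeries 0 = Zq := by
  simp [treeSeries, Zq]

lemma treeSeries_neg_one : treeSeries (-1) = Yq := by
  ext n
  cases n with
  | zero => simp [treeSeries, Yq]
  | succ n => simp [treeSeries, Yq]

lemma treeConvSeries_zero : treeConvSeries 0 = Zq ^ 2 := by
  ext n
  rw [sq, coeff_mul, Nat.sum_antidiagonal_eq_sum_range_succ fun i j => coeff i Zq * coeff j Zq]
  rcases eq_or_ne n 0 with rfl | hn
  · simp [treeConvSeries, Zq]
  have hsub : Ioo 0 n ⊆ range n.succ := fun p hp => by grind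
  rw [← sum_subset hsub]
  · simp only [treeConvSeries, coeff_mk, if_neg hn, Aseq, pow_zero, one_mul, sum_div]
    refine sum_congr rfl fun p hp => ?_
    obtain ⟨hp₀, hpn⟩ := mem_Ioo.1 hp
    simp only [Zq, coeff_mk, if_neg hp₀.ne', if_neg (Nat.sub_ne_zero_of_lt hpn),
      Nat.cast_sub hpn.le]
    field_simp
  · intro p hp hp'
    have hend : p = 0 ∨ n - p = 0 := by grind
    rcases hend with h | h <;> simp [Zq, h]

lemma eulerDerivation_treeSeries (k : ℤ) :
    eulerDerivation ℚ (treeSeries k) = treeSeries (k + 1) := by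
  ext n
  rw [coeff_eulerDerivation]
  rcases eq_or_ne n 0 with rfl | hn
  · simp [treeSeries]
  · simp only [treeSeries, coeff_mk, if_neg hn]
    rw [← add_assoc, zpow_add_one₀ (Nat.cast_ne_zero.2 hn)]
    ring

lemma eulerPrimitive_treeSeries (k : ℤ) :
    eulerPrimitive ℚ (treeSeries k) = treeSeries (k - 1) := by
  have h := eulerPrimitive_eulerDerivation (constantCoeff_treeSeries (k - 1))
  rwa [eulerDerivation_treeSeries, sub_add_cancel] at h

lemma eulerDerivation_treeConvSeries (k : ℕ) :
    eulerDerivation ℚ (treeConvSeries k) = treeConvSeries (k + 1) := by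
  ext n
  rw [coeff_eulerDerivation]
  rcases eq_or_ne n 0 with rfl | hn
  · simp [treeConvSeries]
  · simp only [treeConvSeries, coeff_mk, if_neg hn]
    ring

theorem Yq_mul_one_add_Zq : Yq * (1 + Zq) = Zq := by
  have coeff_one_add_Zq (n : ℕ) : coeff n (1 + Zq) = (n : ℚ) ^ n / n.factorial := by
    cases n <;> simp [Zq, coeff_one]
  have coeff_succ_Yq (n : ℕ) : coeff (n + 1) Yq = (n + 1 : ℚ) ^ n / (n + 1).factorial := by
    simp [Yq]
  have coeff_succ_Zq (n : ℕ) : coeff (n + 1) Zq = (n + 1 : ℚ) ^ (n + 1) / (n + 1).factorial := by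
    simp [Zq]
  have coeff_zero_Yq : coeff 0 Yq = 0 := by simp [Yq]
  ext n
  cases n with
  | zero => simp [Yq, Zq]
  | succ n =>
    have habel := abel_sum_choose_mul_pow_mul_sub_pow (n + 1 : ℚ) n
    rw [coeff_mul, Nat.sum_antidiagonal_succ,
      Nat.sum_antidiagonal_eq_sum_range_succ fun i j => coeff (i + 1) Yq * coeff j (1 + Zq)]
    rw [coeff_zero_Yq, zero_mul, zero_add, coeff_succ_Zq, pow_succ', ← habel, sum_div]
    refine sum_congr rfl fun i hi => ?_
    have hi : i ≤ n := mem_range_succ_iff.1 hi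
    rw [coeff_succ_Yq, coeff_one_add_Zq, Nat.cast_choose ℚ (Nat.succ_le_succ hi),
      Nat.succ_sub_succ, Nat.cast_sub hi, add_sub_add_right_eq_sub]
    field_simp

lemma Yq_mul_Zq : Yq * Zq = Zq - Yq := by
  linear_combination Yq_mul_one_add_Zq

lemma eulerDerivation_Yq : eulerDerivation ℚ Yq = Zq := by
  rw [← treeSeries_neg_one, eulerDerivation_treeSeries, neg_add_cancel, treeSeries_zero]

lemma eulerDerivation_Zq : eulerDerivation ℚ Zq = (1 + Zq) ^ 2 * Zq := by
  have h := congrArg (eulerDerivation ℚ) Yq_mul_one_add_Zq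
  simp only [Derivation.leibniz, map_add, Derivation.map_one_eq_zero, eulerDerivation_Yq,
    smul_eq_mul, zero_add] at h
  linear_combination eulerDerivation ℚ Zq * Yq_mul_one_add_Zq - (1 + Zq) * h

lemma eulerPrimitive_Yq_pow_succ (m : ℕ) : eulerPrimitive ℚ (Yq ^ (m + 1)) =
    ((m + 1 : ℕ) : ℚ)⁻¹ • Yq ^ (m + 1) - ((m + 2 : ℕ) : ℚ)⁻¹ • Yq ^ (m + 2) := by
  have hconst : constantCoeff Yq = 0 := treeSeries_neg_one ▸ constantCoeff_treeSeries (-1)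
  have hpow (j : ℕ) : eulerDerivation ℚ (((j + 1 : ℕ) : ℚ)⁻¹ • Yq ^ (j + 1)) = Yq ^ j * Zq := by
    rw [Derivation.map_smul, Derivation.leibniz_pow, eulerDerivation_Yq, ← Nat.cast_smul_eq_nsmul ℚ,
      inv_smul_smul₀ (Nat.cast_ne_zero.2 j.succ_ne_zero), Nat.add_sub_cancel, smul_eq_mul]
  have hderiv : eulerDerivation ℚ (((m + 1 : ℕ) : ℚ)⁻¹ • Yq ^ (m + 1) -
      ((m + 2 : ℕ) : ℚ)⁻¹ • Yq ^ (m + 2)) = Yq ^ (m + 1) := by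
    rw [map_sub, hpow, hpow]
    linear_combination -Yq ^ m * Yq_mul_Zq
  rw [← hderiv, eulerPrimitive_eulerDerivation (by simp [hconst]), hderiv]

end Series

section Adjoin

lemma eulerDerivation_mem_adjoin {f : ℚ⟦X⟧} (hf : f ∈ Algebra.adjoin ℚ {Yq, Zq}) :
    eulerDerivation ℚ f ∈ Algebra.adjoin ℚ {Yq, Zq} := by
  have hZ : Zq ∈ Algebra.adjoin ℚ {Yq, Zq} := Algebra.subset_adjoin (by simp)
  refine derivation_mem_adjoin _ ?_ hf
  rintro _ (rfl | rfl)
  · rwa [eulerDerivation_Yq]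
  · rw [eulerDerivation_Zq]
    exact mul_mem (pow_mem (add_mem (one_mem _) hZ) 2) hZ

lemma treeSeries_negSucc_mem_span_Yq_pow (k : ℕ) :
    treeSeries (Int.negSucc k) ∈ Submodule.span ℚ (Set.range fun m : ℕ => Yq ^ (m + 1)) := by
  set N := Submodule.span ℚ (Set.range fun m : ℕ => Yq ^ (m + 1))
  have hpow (m : ℕ) : Yq ^ (m + 1) ∈ N := Submodule.subset_span ⟨m, rfl⟩
  have hprim : N ≤ N.comap (eulerPrimitive ℚ) := by
    refine Submodule.span_le.2 ?_
    rintro _ ⟨m, rfl⟩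
    rw [SetLike.mem_coe, Submodule.mem_comap, eulerPrimitive_Yq_pow_succ]
    exact sub_mem (N.smul_mem _ (hpow m)) (N.smul_mem _ (hpow (m + 1)))
  induction k with
  | zero => simpa [treeSeries_neg_one] using hpow 0
  | succ k ih =>
    rw [← Int.negSucc_sub_one, ← eulerPrimitive_treeSeries]
    exact hprim ih

lemma treeSeries_mem_adjoin (k : ℤ) : treeSeries k ∈ Algebra.adjoin ℚ {Yq, Zq} := by
  cases k with
  | ofNat k =>
    induction k with
    | zero => exact treeSeries_zero ▸ Algebra.subset_adjoin (by simp)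
    | succ k ih => exact eulerDerivation_treeSeries k ▸ eulerDerivation_mem_adjoin ih
  | negSucc k =>
    have hle : Submodule.span ℚ (Set.range fun m : ℕ => Yq ^ (m + 1)) ≤
        Subalgebra.toSubmodule (Algebra.adjoin ℚ {Yq, Zq}) := by
      refine Submodule.span_le.2 ?_
      rintro _ ⟨m, rfl⟩
      exact pow_mem (Algebra.subset_adjoin (by simp)) (m + 1)
    exact hle (treeSeries_negSucc_mem_span_Yq_pow k)

lemma treeConvSeries_mem_adjoin (k : ℕ) : treeConvSeries k ∈ Algebra.adjoin ℚ {Yq, Zq} := by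
  induction k with
  | zero => exact treeConvSeries_zero ▸ pow_mem (Algebra.subset_adjoin (by simp)) 2
  | succ k ih => exact eulerDerivation_treeConvSeries k ▸ eulerDerivation_mem_adjoin ih

end Adjoin

section Span

/-- The `ℚ`-span of `1`, the series `treeSeries k` with `k ∈ ℤ` and the series `treeConvSeries k`
with `k ∈ ℕ`, to be identified with `ℚ[Y, Z]`. -/
noncomputable def treeSpan : Submodule ℚ ℚ⟦X⟧ :=
  Submodule.span ℚ
    ({1} ∪ {f | ∃ k : ℤ, f = treeSeries k} ∪ {f | ∃ k : ℕ, f = treeConvSeries k})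

lemma one_mem_treeSpan : 1 ∈ treeSpan :=
  Submodule.subset_span (.inl (.inl rfl))

lemma treeSeries_mem_treeSpan (k : ℤ) : treeSeries k ∈ treeSpan :=
  Submodule.subset_span (.inl (.inr ⟨k, rfl⟩))

lemma treeConvSeries_mem_treeSpan (k : ℕ) : treeConvSeries k ∈ treeSpan :=
  Submodule.subset_span (.inr ⟨k, rfl⟩)

lemma eulerDerivation_mem_treeSpan {f : ℚ⟦X⟧} (hf : f ∈ treeSpan) :
    eulerDerivation ℚ f ∈ treeSpan := by
  suffices h : treeSpan ≤ treeSpan.comap (eulerDerivation ℚ : ℚ⟦X⟧ →ₗ[ℚ] ℚ⟦X⟧) from h hf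
  refine Submodule.span_le.2 ?_
  rintro _ ((rfl | ⟨k, rfl⟩) | ⟨k, rfl⟩)
  · simp
  · simpa [eulerDerivation_treeSeries] using treeSeries_mem_treeSpan (k + 1)
  · simpa [eulerDerivation_treeConvSeries] using treeConvSeries_mem_treeSpan (k + 1)

lemma Yq_pow_succ_mem_span_treeSeries (m : ℕ) :
    Yq ^ (m + 1) ∈ Submodule.span ℚ (Set.range treeSeries) := by
  set N := Submodule.span ℚ (Set.range treeSeries)
  have hprim : N ≤ N.comap (eulerPrimitive ℚ) := by
    refine Submodule.span_le.2 ?_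
    rintro _ ⟨k, rfl⟩
    exact Submodule.subset_span ⟨k - 1, (eulerPrimitive_treeSeries k).symm⟩
  induction m with
  | zero => exact Submodule.subset_span ⟨-1, by rw [treeSeries_neg_one, zero_add, pow_one]⟩
  | succ m ih =>
    have hpow : Yq ^ (m + 2) = ((m + 2 : ℕ) : ℚ) •
        (((m + 1 : ℕ) : ℚ)⁻¹ • Yq ^ (m + 1) - eulerPrimitive ℚ (Yq ^ (m + 1))) := by
      rw [eulerPrimitive_Yq_pow_succ, sub_sub_cancel,
        smul_inv_smul₀ (Nat.cast_ne_zero.2 (m + 1).succ_ne_zero)]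
    rw [hpow]
    exact N.smul_mem _ (sub_mem (N.smul_mem _ ih) (hprim ih))

lemma Yq_pow_mem_treeSpan (m : ℕ) : Yq ^ m ∈ treeSpan := by
  cases m with
  | zero => exact one_mem_treeSpan
  | succ m =>
    refine Submodule.span_le.2 ?_ (Yq_pow_succ_mem_span_treeSeries m)
    rintro _ ⟨k, rfl⟩
    exact treeSeries_mem_treeSpan k

lemma Zq_pow_mem_treeSpan (m : ℕ) : Zq ^ m ∈ treeSpan := by
  cases m with
  | zero => exact one_mem_treeSpan
  | succ m =>
    exact pow_succ_mem_of_derivation_mem eulerDerivation_Zq (fun _ => eulerDerivation_mem_treeSpan)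
      (treeSeries_zero ▸ treeSeries_mem_treeSpan 0)
      (treeConvSeries_zero ▸ treeConvSeries_mem_treeSpan 0) m

end Span

/-- The algebra `𝒜 = ℚ[Y, Z]` is spanned, as a `ℚ`-vector space, by `1`, the series
`Σ_{n≥1} (n^{n+k}/n!) qⁿ` for `k ∈ ℤ`, and the series `Σ_{n≥1} (n^k·Aₙ/n!) qⁿ` for `k ∈ ℕ`. -/
theorem adjoin_YZ_eq_span :
    Subalgebra.toSubmodule (Algebra.adjoin ℚ {Yq, Zq}) =
      Submodule.span ℚ
        ({(1 : PowerSeries ℚ)} ∪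
         {f | ∃ k : ℤ, f = PowerSeries.mk fun n =>
            if n = 0 then 0 else (n : ℚ) ^ ((n : ℤ) + k) / n.factorial} ∪
         {f | ∃ k : ℕ, f = PowerSeries.mk fun n =>
            if n = 0 then 0 else (n : ℚ) ^ k * Aseq n / n.factorial}) := by
  change _ = treeSpan
  apply le_antisymm
  · rw [adjoin_pair_eq_span_pow_union_pow Yq_mul_Zq, Submodule.span_le]
    rintro _ (⟨m, rfl⟩ | ⟨m, rfl⟩)
    · exact Yq_pow_mem_treeSpan m
    · exact Zq_pow_mem_treeSpan m
  · refine Submodule.span_le.2 ?_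
    rintro _ ((rfl | ⟨k, rfl⟩) | ⟨k, rfl⟩)
    · exact one_mem (Algebra.adjoin ℚ {Yq, Zq})
    · exact treeSeries_mem_adjoin k
    · exact treeConvSeries_mem_adjoin k
end

section
/- For every natural number k, the formal power series Σ_{n≥1} (m_{n,k}/n!) q^n and Σ_{n≥1} (p_{n,k}/n!) q^n both lie in the algebra 𝒜. -/
open Classical in
/-- `m_{n,k} = Σ_T Σ_{(a,b)} l_T(a,b)ᵏ`, summed over all Cayley trees `T` on `n` vertices
(connected acyclic simple graphs on `{1,…,n}`) and all ordered pairs `(a,b)` of vertices,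
where `l_T(a,b)` is the graph distance. -/
noncomputable def mCayley (n k : ℕ) : ℕ :=
  ∑ G ∈ Finset.univ.filter (fun G : SimpleGraph (Fin n) => G.Connected ∧ G.IsAcyclic),
    ∑ a : Fin n, ∑ b : Fin n, (G.dist a b) ^ k

open Classical in
/-- `p_{n,k} = Σ_T Σ_{(a,b)} C(l_T(a,b), k)`, summed over all Cayley trees `T` on `n`
vertices and all ordered pairs `(a,b)` of vertices. -/
noncomputable def pCayley (n k : ℕ) : ℕ :=
  ∑ G ∈ Finset.univ.filter (fun G : SimpleGraph (Fin n) => G.Connected ∧ G.IsAcyclic),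
    ∑ a : Fin n, ∑ b : Fin n, (G.dist a b).choose k

/-! A tree with an ordered pair of vertices at distance `l` is a chain of `l + 1` rooted trees, so
`∑ₙ (∑_T ∑_{(a,b)} h (l_T(a,b))) qⁿ / n! = ∑ₗ h l * Y ^ (l + 1)` for every `h`. For `h l = C(l, k)`
the right-hand side is `(Y / (1 - Y)) ^ (k + 1) = Z ^ (k + 1)`, and `l ^ k` is a linear combination
of binomial coefficients in `l`, so both series are polynomials in `Z` alone.

The chains are counted through rooted forests on a fixed vertex set: cutting the edge above a
vertex `x` turns `x` into a further root, and the resulting recursion in the root set has an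
explicit solution. The coefficients of the powers of the solution `T` of `T = q exp T` follow from
its differential equation `q T' (1 - T) = T`; those of `T` itself show that `T = Y`. -/

section

open Finset Function

section RootedForests

variable {V : Type*} {f g : V → V} {R : Finset V} {a x y : V}

/-- A rooted forest on `V` with root set `R`, encoded by its parent function `f`: roots are their
own parents, and iterating `f` leads every vertex to a root. -/
structure IsRootedForest (f : V → V) (R : Finset V) : Prop where
  map_root : ∀ x ∈ R, f x = x
  exists_iterate_mem : ∀ x, ∃ k, f^[k] x ∈ R

/-- The number of steps that the parent function `f` needs to lead `x` to `a` for the first time.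
It is `0` when `x` never arrives at `a`. -/
noncomputable def depth (f : V → V) (a x : V) : ℕ := sInf {k | f^[k] x = a}

lemma iterate_depth (h : ∃ k, f^[k] x = a) : f^[depth f a x] x = a := Nat.sInf_mem h

lemma depth_le {k : ℕ} (h : f^[k] x = a) : depth f a x ≤ k := Nat.sInf_le h

lemma depth_self (f : V → V) (a : V) : depth f a a = 0 := Nat.le_zero.1 (depth_le rfl)

lemma exists_iterate_map_eq_iff (hx : x ≠ a) : (∃ k, f^[k] (f x) = a) ↔ ∃ k, f^[k] x = a := by
  refine ⟨fun ⟨k, hk⟩ ↦ ⟨k + 1, hk⟩, fun ⟨k, hk⟩ ↦ ?_⟩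
  cases k with
  | zero => exact absurd hk hx
  | succ k => exact ⟨k, hk⟩

lemma depth_eq_depth_map_add_one (h : ∃ k, f^[k] x = a) (hx : x ≠ a) :
    depth f a x = depth f a (f x) + 1 := by
  refine le_antisymm (depth_le ?_) ?_
  · rw [iterate_succ_apply, iterate_depth ((exists_iterate_map_eq_iff hx).2 h)]
  · have hdepth := iterate_depth h
    cases hd : depth f a x with
    | zero => rw [hd] at hdepth; exact absurd hdepth hx
    | succ d => exact Nat.succ_le_succ (depth_le (by rwa [hd, iterate_succ_apply] at hdepth))

lemma iterate_update_of_forall_ne [DecidableEq V] (h : ∀ k, f^[k] y ≠ x) (z : V) (k : ℕ) :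
    (update f x z)^[k] y = f^[k] y := by
  induction k with
  | zero => rfl
  | succ k ih => rw [iterate_succ_apply', iterate_succ_apply', ih, update_of_ne (h k)]

namespace IsRootedForest

lemma iterate_root (hf : IsRootedForest f R) (ha : a ∈ R) (k : ℕ) : f^[k] a = a :=
  iterate_fixed (hf.map_root a ha) k

lemma iterate_eq_of_le (hf : IsRootedForest f R) {i j : ℕ} (hi : f^[i] x ∈ R) (hij : i ≤ j) :
    f^[j] x = f^[i] x := by
  rw [← Nat.sub_add_cancel hij, iterate_add_apply, hf.iterate_root hi]

lemma existsUnique_root (hf : IsRootedForest f R) (x : V) : ∃! a, a ∈ R ∧ ∃ k, f^[k] x = a := by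
  obtain ⟨k, hk⟩ := hf.exists_iterate_mem x
  refine ⟨_, ⟨hk, k, rfl⟩, ?_⟩
  rintro _ ⟨hj, j, rfl⟩
  rcases le_total k j with h | h
  · exact hf.iterate_eq_of_le hk h
  · exact (hf.iterate_eq_of_le hj h).symm

lemma iterate_map_ne (hf : IsRootedForest f R) (hx : x ∉ R) (k : ℕ) : f^[k] (f x) ≠ x := by
  intro hper
  obtain ⟨j, hj⟩ := hf.exists_iterate_mem x
  have hfix : f^[(k + 1) * j] x = x := by
    rw [iterate_mul]
    exact iterate_fixed hper j
  have hle : j ≤ (k + 1) * j := Nat.le_mul_of_pos_left j k.succ_pos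
  exact hx (hfix ▸ (hf.iterate_eq_of_le hj hle).symm ▸ hj)

lemma cut [DecidableEq V] (hf : IsRootedForest f R) (x : V) :
    IsRootedForest (update f x x) (insert x R) where
  map_root z hz := by
    rcases eq_or_ne z x with rfl | hzx
    · exact update_self ..
    · rw [update_of_ne hzx, hf.map_root z (mem_of_mem_insert_of_ne hz hzx)]
  exists_iterate_mem z := by
    by_contra! hz
    obtain ⟨k, hk⟩ := hf.exists_iterate_mem z
    have hzx (k : ℕ) : (update f x x)^[k] z ≠ x :=
      (ne_of_mem_of_not_mem (mem_insert_self x R) (hz k)).symm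
    have hiter := iterate_update_of_forall_ne hzx (f x) k
    rw [update_idem, update_eq_self] at hiter
    exact hz k (mem_insert_of_mem (hiter ▸ hk))

lemma graft [DecidableEq V] (hg : IsRootedForest g (insert x R)) (hx : x ∉ R)
    (hy : ∀ k, g^[k] y ≠ x) : IsRootedForest (update g x y) R where
  map_root z hz := by
    rw [update_of_ne (ne_of_mem_of_not_mem hz hx), hg.map_root z (mem_insert_of_mem hz)]
  exists_iterate_mem z := by
    by_contra! hz
    obtain ⟨j, hj⟩ := hg.exists_iterate_mem y
    have hzx : ∀ k, (update g x y)^[k] z ≠ x := by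
      intro k hk
      apply hz (j + (k + 1))
      rw [iterate_add_apply, iterate_succ_apply', hk, update_self, iterate_update_of_forall_ne hy]
      exact mem_of_mem_insert_of_ne hj (hy j)
    obtain ⟨k, hk⟩ := hg.exists_iterate_mem z
    have hundo : update (update g x y) x x = g := by
      rw [update_idem, update_eq_self_iff]
      exact (hg.map_root x (mem_insert_self x R)).symm
    have hiter := iterate_update_of_forall_ne hzx x k
    rw [hundo] at hiter
    exact hz k (mem_of_mem_insert_of_ne (hiter ▸ hk) (hzx k))

end IsRootedForest

lemma isRootedForest_univ_iff [Fintype V] : IsRootedForest f univ ↔ f = id := by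
  refine ⟨fun hf ↦ funext fun x ↦ hf.map_root x (mem_univ x), ?_⟩
  rintro rfl
  exact ⟨fun _ _ ↦ rfl, fun x ↦ ⟨0, mem_univ x⟩⟩

open Classical in
/-- The finset of all rooted forests on `V` with root set `R`. -/
noncomputable def rootedForests [Fintype V] (R : Finset V) : Finset (V → V) :=
  {f | IsRootedForest f R}

section Counting

variable [Fintype V] {M : Type*} [AddCommMonoid M]

open Classical in
/-- The sum of `h (depth f a x)` over all rooted forests `f` with root set `R` and all vertices `x`
that `f` leads to `a`. For a root `a`, these are the vertices of the tree of `a`. -/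
noncomputable def depthSum (h : ℕ → M) (R : Finset V) (a : V) : M :=
  ∑ x, ∑ f ∈ rootedForests R with ∃ k, f^[k] x = a, h (depth f a x)

lemma mem_rootedForests : f ∈ rootedForests R ↔ IsRootedForest f R := by
  simp only [rootedForests, mem_filter_univ]

lemma rootedForests_univ : rootedForests (univ : Finset V) = {id} := by
  ext f
  simp only [mem_rootedForests, isRootedForest_univ_iff, mem_singleton]

variable [DecidableEq V]

omit [Fintype V] in
lemma depth_cut_map (hf : IsRootedForest f R) (hx : x ∉ R) :
    depth (update f x x) a (f x) = depth f a (f x) := by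
  simp only [depth, iterate_update_of_forall_ne (hf.iterate_map_ne hx)]

open Classical in
/-- Cutting `f` above `x` leaves a forest in which `x` is a root together with the former parent
of `x`, which lies outside the tree of `x`. -/
lemma sum_depth_eq_depthSum_insert (h : ℕ → M) (hx : x ∉ R) (ha : a ∈ R) :
    ∑ f ∈ rootedForests R with ∃ k, f^[k] x = a, h (depth f a x) =
      depthSum (fun l ↦ h (l + 1)) (insert x R) a := by
  have hxa : x ≠ a := (ne_of_mem_of_not_mem ha hx).symm
  have hne {g : V → V} (hg : IsRootedForest g (insert x R)) {y : V} (hy : ∃ k, g^[k] y = a)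
      (k : ℕ) : g^[k] y ≠ x := by
    intro hk
    exact hxa ((hg.existsUnique_root y).unique ⟨mem_insert_self x R, k, hk⟩
      ⟨mem_insert_of_mem ha, hy⟩)
  simp only [depthSum, sum_sigma']
  refine sum_bij' (fun f _ ↦ ⟨f x, update f x x⟩) (fun p _ ↦ update p.2 x p.1) ?_ ?_ ?_ ?_ ?_
  · simp only [mem_filter, mem_rootedForests, mem_sigma, mem_univ, true_and]
    rintro f ⟨hf, hreach⟩
    simp only [iterate_update_of_forall_ne (hf.iterate_map_ne hx), exists_iterate_map_eq_iff hxa]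
    exact ⟨hf.cut x, hreach⟩
  · simp only [mem_filter, mem_rootedForests, mem_sigma, mem_univ, true_and]
    rintro ⟨y, g⟩ ⟨hg, hreach⟩
    refine ⟨hg.graft hx (hne hg hreach), (exists_iterate_map_eq_iff hxa).1 ?_⟩
    simpa only [update_self, iterate_update_of_forall_ne (hne hg hreach)] using hreach
  · intro f _
    simp only [update_idem, update_eq_self]
  · simp only [mem_filter, mem_rootedForests, mem_sigma, mem_univ, true_and]
    rintro ⟨y, g⟩ ⟨hg, -⟩
    simp only [update_self, update_idem, Sigma.mk.injEq, heq_eq_eq, true_and, update_eq_self_iff]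
    exact (hg.map_root x (mem_insert_self x R)).symm
  · simp only [mem_filter, mem_rootedForests]
    rintro f ⟨hf, hreach⟩
    rw [depth_eq_depth_map_add_one hreach hxa, depth_cut_map hf hx]

lemma depthSum_eq_add_sum (h : ℕ → M) (ha : a ∈ R) :
    depthSum h R a = #(rootedForests R) • h 0 +
      ∑ x ∈ Rᶜ, depthSum (fun l ↦ h (l + 1)) (insert x R) a := by
  classical
  rw [depthSum, ← sum_add_sum_compl R]
  congr 1
  · have hroot {x : V} (hx : x ∈ R) : ∀ f ∈ rootedForests R, (∃ k, f^[k] x = a) ↔ x = a := by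
      intro f hf
      simp only [(mem_rootedForests.1 hf).iterate_root hx, exists_const]
    rw [sum_eq_single_of_mem a ha fun x hx hxa ↦ by
      rw [filter_false_of_mem fun f hf ↦ (hroot hx f hf).not.2 hxa, sum_empty],
      filter_true_of_mem fun f hf ↦ (hroot ha f hf).2 rfl]
    simp only [depth_self, sum_const]
  · exact sum_congr rfl fun x hx ↦ sum_depth_eq_depthSum_insert h (mem_compl.1 hx) ha

lemma card_rootedForests_eq_sum (hx : x ∉ R) :
    #(rootedForests R) = ∑ a ∈ R, depthSum (fun _ ↦ 1) (insert x R) a := by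
  classical
  rw [sum_congr rfl fun a ha ↦ (sum_depth_eq_depthSum_insert (fun _ ↦ 1) hx ha).symm,
    card_eq_sum_ones]
  simp only [sum_filter]
  rw [sum_comm]
  refine sum_congr rfl fun f hf ↦ ?_
  obtain ⟨a, ⟨ha, hxa⟩, huniq⟩ := (mem_rootedForests.1 hf).existsUnique_root x
  rw [sum_eq_single_of_mem a ha fun b hb hba ↦ if_neg fun hxb ↦ hba (huniq b ⟨hb, hxb⟩), if_pos hxa]

lemma card_compl_insert {m : ℕ} (hm : #Rᶜ = m + 1) (hx : x ∈ Rᶜ) : #(insert x R)ᶜ = m := by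
  rw [compl_insert, card_erase_of_mem hx, hm, Nat.add_sub_cancel]

lemma depthSum_one_eq_pow (ha : a ∈ R) : depthSum (fun _ ↦ 1) R a = Fintype.card V ^ #Rᶜ := by
  induction hm : #Rᶜ generalizing R a with
  | zero =>
    obtain rfl : R = univ := by rwa [card_eq_zero, compl_eq_empty_iff] at hm
    rw [depthSum_eq_add_sum _ ha, rootedForests_univ, compl_univ, sum_empty, card_singleton,
      one_smul, add_zero, pow_zero]
  | succ m ih =>
    have hinsert {x b : V} (hx : x ∈ Rᶜ) (hb : b ∈ R) :
        depthSum (fun _ ↦ 1) (insert x R) b = Fintype.card V ^ m :=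
      ih (mem_insert_of_mem hb) (card_compl_insert hm hx)
    obtain ⟨x, hx⟩ : Rᶜ.Nonempty := card_pos.1 (by lia)
    calc depthSum (fun _ ↦ 1) R a
        = ∑ b ∈ R, depthSum (fun _ ↦ 1) (insert x R) b +
            ∑ y ∈ Rᶜ, depthSum (fun _ ↦ 1) (insert y R) a := by
          rw [depthSum_eq_add_sum _ ha, card_rootedForests_eq_sum (mem_compl.1 hx), smul_eq_mul,
            mul_one]
      _ = #R * Fintype.card V ^ m + #Rᶜ * Fintype.card V ^ m := by
          rw [sum_congr rfl fun b hb ↦ hinsert hx hb, sum_congr rfl fun y hy ↦ hinsert hy ha,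
            sum_const, sum_const, smul_eq_mul, smul_eq_mul]
      _ = Fintype.card V ^ (m + 1) := by rw [← add_mul, card_add_card_compl, pow_succ']

lemma card_rootedForests_mul_card (R : Finset V) :
    #(rootedForests R) * Fintype.card V = #R * Fintype.card V ^ #Rᶜ := by
  obtain hR | ⟨x, hx⟩ := Rᶜ.eq_empty_or_nonempty
  · obtain rfl := (compl_eq_empty_iff R).1 hR
    rw [rootedForests_univ, card_singleton, one_mul, card_univ, hR, card_empty, pow_zero, mul_one]
  · rw [card_rootedForests_eq_sum (mem_compl.1 hx),
      sum_congr rfl fun b hb ↦ depthSum_one_eq_pow (mem_insert_of_mem hb), sum_const, smul_eq_mul,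
      mul_assoc, ← pow_succ, compl_insert, card_erase_add_one hx]

lemma card_mul_depthSum {S : Type*} [CommSemiring S] (h : ℕ → S) (ha : a ∈ R) :
    Fintype.card V * depthSum h R a = ∑ l ∈ range (#Rᶜ + 1),
      ((#Rᶜ).descFactorial l * ((#R + l) * Fintype.card V ^ (#Rᶜ - l)) : ℕ) * h l := by
  have hsum (R : Finset V) (h : ℕ → S) (ha : a ∈ R) : Fintype.card V * depthSum h R a =
      (#R * Fintype.card V ^ #Rᶜ : ℕ) * h 0 +
        ∑ x ∈ Rᶜ, Fintype.card V * depthSum (fun l ↦ h (l + 1)) (insert x R) a := by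
    rw [depthSum_eq_add_sum _ ha, mul_add, mul_sum, ← card_rootedForests_mul_card, nsmul_eq_mul]
    push_cast
    ring
  induction hm : #Rᶜ generalizing R h with
  | zero =>
    rw [hsum R h ha, hm, card_eq_zero.1 hm, sum_empty, sum_range_one, Nat.descFactorial_zero,
      one_mul, add_zero, add_zero]
  | succ m ih =>
    have hinsert (x : V) (hx : x ∈ Rᶜ) :
        Fintype.card V * depthSum (fun l ↦ h (l + 1)) (insert x R) a = ∑ l ∈ range (m + 1),
          (m.descFactorial l * ((#R + (l + 1)) * Fintype.card V ^ (m - l)) : ℕ) * h (l + 1) := by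
      rw [ih _ (mem_insert_of_mem ha) (card_compl_insert hm hx),
        card_insert_of_notMem (mem_compl.1 hx)]
      simp only [add_assoc, add_comm 1]
    rw [hsum R h ha, hm, sum_congr rfl hinsert, sum_const, hm, sum_range_succ' _ (m + 1), add_comm,
      Nat.descFactorial_zero, one_mul, add_zero, Nat.sub_zero, nsmul_eq_mul, mul_sum]
    congr 1
    refine sum_congr rfl fun l _ ↦ ?_
    rw [Nat.succ_descFactorial_succ, Nat.add_sub_add_right]
    push_cast
    ring

end Counting

end RootedForests

section FunctionGraph

variable {V : Type*} {f g : V → V} {a x y : V}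

lemma IsRootedForest.exists_iterate_eq (hf : IsRootedForest f {a}) (x : V) : ∃ k, f^[k] x = a :=
  (hf.exists_iterate_mem x).imp fun _ ↦ mem_singleton.1

lemma isRootedForest_singleton_of_lt (d : V → ℕ) (hfa : f a = a) (hd : ∀ x ≠ a, d (f x) < d x) :
    IsRootedForest f {a} where
  map_root x hx := by rwa [mem_singleton.1 hx]
  exists_iterate_mem x := by
    induction hn : d x using Nat.strong_induction_on generalizing x with
    | _ n ih =>
      obtain rfl | hx := eq_or_ne x a
      · exact ⟨0, mem_singleton_self x⟩
      · obtain ⟨k, hk⟩ := ih _ (hn ▸ hd x hx) (f x) rfl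
        exact ⟨k + 1, hk⟩

/-- The graph that joins every `x` to `f x`. If `f` is the parent function of a rooted forest, this
is the underlying unrooted forest. -/
def functionGraph (f : V → V) : SimpleGraph V := SimpleGraph.fromRel fun x y ↦ f x = y

lemma functionGraph_adj : (functionGraph f).Adj x y ↔ x ≠ y ∧ (f x = y ∨ f y = x) := Iff.rfl

lemma functionGraph_le {G : SimpleGraph V} (h : ∀ x, x ≠ f x → G.Adj x (f x)) :
    functionGraph f ≤ G := by
  rintro x y ⟨hxy, rfl | rfl⟩
  · exact h x hxy
  · exact (h y hxy.symm).symm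

lemma exists_walk_iterate_length_le (f : V → V) (k : ℕ) (x : V) :
    ∃ w : (functionGraph f).Walk x (f^[k] x), w.length ≤ k := by
  induction k generalizing x with
  | zero => exact ⟨.nil, le_rfl⟩
  | succ k ih =>
    obtain ⟨w, hw⟩ := ih (f x)
    by_cases hx : x = f x
    · exact ⟨w.copy hx.symm rfl,
        ((SimpleGraph.Walk.length_copy w hx.symm rfl).trans_le hw).trans k.le_succ⟩
    · exact ⟨.cons (functionGraph_adj.2 ⟨hx, .inl rfl⟩) w, Nat.succ_le_succ hw⟩

namespace IsRootedForest

lemma functionGraph_connected (hf : IsRootedForest f {a}) : (functionGraph f).Connected := by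
  rw [SimpleGraph.connected_iff_exists_forall_reachable]
  refine ⟨a, fun x ↦ ?_⟩
  obtain ⟨k, hk⟩ := hf.exists_iterate_eq x
  exact hk ▸ (exists_walk_iterate_length_le f k x).choose.reachable.symm

lemma adj_iff (hf : IsRootedForest f {a}) (hx : x ≠ a) :
    (functionGraph f).Adj x y ↔ f x = y ∨ (y ≠ a ∧ f y = x) := by
  have hfa : f a = a := hf.map_root a (mem_singleton_self a)
  have hxf : f x ≠ x := fun h ↦ hf.iterate_map_ne (notMem_singleton.2 hx) 0 h
  rw [functionGraph_adj]
  grind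

lemma depth_le_add_one_of_adj (hf : IsRootedForest f {a}) (h : (functionGraph f).Adj x y) :
    depth f a y ≤ depth f a x + 1 := by
  have hx := iterate_depth (hf.exists_iterate_eq x)
  obtain ⟨-, rfl | rfl⟩ := functionGraph_adj.1 h
  · refine (depth_le ?_).trans (Nat.le_succ _)
    rw [← iterate_succ_apply, iterate_succ_apply', hx, hf.map_root a (mem_singleton_self a)]
  · exact depth_le hx

lemma depth_le_add_length (hf : IsRootedForest f {a}) (w : (functionGraph f).Walk x y) :
    depth f a y ≤ depth f a x + w.length := by
  induction w with
  | nil => rfl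
  | cons h w ih =>
    rw [SimpleGraph.Walk.length_cons]
    have := hf.depth_le_add_one_of_adj h
    lia

lemma dist_functionGraph (hf : IsRootedForest f {a}) (x : V) :
    (functionGraph f).dist a x = depth f a x := by
  apply le_antisymm
  · obtain ⟨w, hw⟩ := exists_walk_iterate_length_le f (depth f a x) x
    calc (functionGraph f).dist a x
        = (functionGraph f).dist x (f^[depth f a x] x) := by
          rw [iterate_depth (hf.exists_iterate_eq x), SimpleGraph.dist_comm]
      _ ≤ w.length := SimpleGraph.dist_le w
      _ ≤ depth f a x := hw
  · obtain ⟨w, hw⟩ := hf.functionGraph_connected.exists_walk_length_eq_dist a x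
    simpa only [depth_self, zero_add, hw] using hf.depth_le_add_length w

lemma map_eq_iff (hf : IsRootedForest f {a}) (hx : x ≠ a) :
    f x = y ↔ (functionGraph f).Adj x y ∧
      (functionGraph f).dist a x = (functionGraph f).dist a y + 1 := by
  have hdepth {z : V} (hz : z ≠ a) := depth_eq_depth_map_add_one (hf.exists_iterate_eq z) hz
  rw [hf.adj_iff hx, hf.dist_functionGraph, hf.dist_functionGraph]
  constructor
  · rintro rfl
    exact ⟨.inl rfl, hdepth hx⟩
  · rintro ⟨h | ⟨hy, rfl⟩, hxy⟩
    · exact h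
    · have := hdepth hy
      lia

lemma functionGraph_injective (hf : IsRootedForest f {a}) (hg : IsRootedForest g {a})
    (h : functionGraph f = functionGraph g) : f = g := by
  funext x
  obtain rfl | hx := eq_or_ne x a
  · rw [hf.map_root x (mem_singleton_self x), hg.map_root x (mem_singleton_self x)]
  · rw [hf.map_eq_iff hx, h, ← hg.map_eq_iff hx]

lemma isTree_functionGraph [Finite V] (hf : IsRootedForest f {a}) : (functionGraph f).IsTree := by
  have hconn := hf.functionGraph_connected
  refine SimpleGraph.isTree_iff_connected_and_card.2
    ⟨hconn, hconn.card_vert_le_card_edgeSet_add_one.antisymm' ?_⟩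
  have hsub : (functionGraph f).edgeSet ⊆ (fun x ↦ s(x, f x)) '' {a}ᶜ := by
    have hfa : f a = a := hf.map_root a (mem_singleton_self a)
    intro e he
    induction e with
    | _ x y =>
      obtain ⟨hxy, h | h⟩ := functionGraph_adj.1 he
      · exact ⟨x, fun hx ↦ hxy (by rw [← h, hx, hfa]), congrArg (s(x, ·)) h⟩
      · exact ⟨y, fun hy ↦ hxy (by rw [← h, hy, hfa]), (congrArg (s(y, ·)) h).trans Sym2.eq_swap⟩
  have hle : (functionGraph f).edgeSet.ncard ≤ ({a}ᶜ : Set V).ncard :=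
    (Set.ncard_le_ncard hsub).trans (Set.ncard_image_le (Set.toFinite _))
  rw [← Set.ncard_add_ncard_compl {a}, Set.ncard_singleton, add_comm]
  exact Nat.add_le_add_left hle 1

end IsRootedForest

lemma exists_adj_dist_lt {G : SimpleGraph V} (h : G.Reachable a x) (hx : x ≠ a) :
    ∃ y, G.Adj x y ∧ G.dist a y < G.dist a x := by
  obtain ⟨w, hw⟩ := h.symm.exists_walk_length_eq_dist
  cases w with
  | nil => exact absurd rfl hx
  | @cons _ y _ hadj w =>
    refine ⟨y, hadj, ?_⟩
    rw [SimpleGraph.dist_comm, SimpleGraph.dist_comm (u := a), ← hw, SimpleGraph.Walk.length_cons]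
    exact Nat.lt_succ_of_le (SimpleGraph.dist_le w)

lemma exists_isRootedForest_functionGraph_eq {G : SimpleGraph V} (hG : G.IsTree) (a : V) :
    ∃ f, IsRootedForest f {a} ∧ functionGraph f = G := by
  have hparent (x : V) : ∃ y, (x = a → y = a) ∧ (x ≠ a → G.Adj x y ∧ G.dist a y < G.dist a x) := by
    obtain rfl | hx := eq_or_ne x a
    · exact ⟨x, fun _ ↦ rfl, fun hx ↦ absurd rfl hx⟩
    · exact (exists_adj_dist_lt (hG.connected a x) hx).imp fun y hy ↦
        ⟨fun hxa ↦ absurd hxa hx, fun _ ↦ hy⟩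
  choose f hfa hf using hparent
  have hforest : IsRootedForest f {a} :=
    isRootedForest_singleton_of_lt (G.dist a) (hfa a rfl) fun x hx ↦ (hf x hx).2
  have hle : functionGraph f ≤ G := functionGraph_le fun x hx ↦
    (hf x fun hxa ↦ hx (by rw [hfa x hxa, hxa])).1
  exact ⟨f, hforest, hle.antisymm <|
    (SimpleGraph.isTree_iff_minimal_connected.1 hG).2 hforest.functionGraph_connected hle⟩

open Classical in
lemma sum_isTree_dist [Fintype V] [DecidableEq V] {M : Type*} [AddCommMonoid M] (h : ℕ → M)
    (a x : V) :
    ∑ G : SimpleGraph V with G.Connected ∧ G.IsAcyclic, h (G.dist a x) =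
      ∑ f ∈ rootedForests {a}, h (depth f a x) := by
  symm
  refine sum_bij (fun f _ ↦ functionGraph f) ?_ ?_ ?_ ?_
  · simp only [mem_rootedForests, mem_filter_univ]
    exact fun f hf ↦ ⟨hf.functionGraph_connected, hf.isTree_functionGraph.isAcyclic⟩
  · simp only [mem_rootedForests]
    exact fun f hf g hg ↦ hf.functionGraph_injective hg
  · simp only [mem_rootedForests, mem_filter_univ, exists_prop]
    exact fun G hG ↦ exists_isRootedForest_functionGraph_eq ⟨hG.1, hG.2⟩ a
  · simp only [mem_rootedForests]
    exact fun f hf ↦ by rw [hf.dist_functionGraph]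

open Classical in
lemma sum_isTree_sum_dist [Fintype V] [DecidableEq V] {S : Type*} [CommSemiring S]
    [IsCancelMulZero S] [CharZero S] (h : ℕ → S) :
    ∑ G : SimpleGraph V with G.Connected ∧ G.IsAcyclic, ∑ a, ∑ b, h (G.dist a b) =
      ∑ l ∈ range (Fintype.card V), ((Fintype.card V - 1).descFactorial l *
        ((l + 1) * Fintype.card V ^ (Fintype.card V - 1 - l)) : ℕ) * h l := by
  have htree (a : V) : ∑ G : SimpleGraph V with G.Connected ∧ G.IsAcyclic, ∑ b, h (G.dist a b) =
      depthSum h {a} a := by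
    rw [sum_comm, depthSum]
    refine sum_congr rfl fun x _ ↦ ?_
    rw [sum_isTree_dist,
      filter_true_of_mem fun f hf ↦ (mem_rootedForests.1 hf).exists_iterate_eq x]
  rw [sum_comm, sum_congr rfl fun a _ ↦ htree a]
  cases isEmpty_or_nonempty V with
  | inl _ => rw [univ_eq_empty, sum_empty, Fintype.card_eq_zero, sum_range_zero]
  | inr _ =>
    have hcard : (Fintype.card V : S) ≠ 0 := Nat.cast_ne_zero.2 Fintype.card_ne_zero
    apply mul_left_cancel₀ hcard
    rw [mul_sum, sum_congr rfl fun a _ ↦ card_mul_depthSum h (mem_singleton_self a)]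
    simp only [card_compl, card_singleton, Nat.sub_add_cancel Fintype.card_pos, sum_const,
      card_univ, nsmul_eq_mul, add_comm 1]

end FunctionGraph

section TreeFunction

open PowerSeries

lemma coeff_X_mul_derivative {R : Type*} [CommSemiring R] (f : R⟦X⟧) (n : ℕ) :
    coeff n (X * d⁄dX R f) = n * coeff n f := by
  cases n with
  | zero => rw [coeff_zero_X_mul, Nat.cast_zero, zero_mul]
  | succ n => rw [coeff_succ_X_mul, coeff_derivative, mul_comm, Nat.cast_succ]

lemma coeff_pow_eq_zero {R : Type*} [CommSemiring R] {f : R⟦X⟧} (h0 : constantCoeff f = 0)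
    {m n : ℕ} (h : n < m) : coeff n (f ^ m) = 0 :=
  X_pow_dvd_iff.1 (pow_dvd_pow_of_dvd (X_dvd_iff.2 h0) m) n h

lemma coeff_pow_self {R : Type*} [CommSemiring R] {f : R⟦X⟧} (h0 : constantCoeff f = 0) (m : ℕ) :
    coeff m (f ^ m) = coeff 1 f ^ m := by
  obtain ⟨g, rfl⟩ := X_dvd_iff.2 h0
  rw [mul_pow, coeff_X_pow_mul', if_pos le_rfl, Nat.sub_self, coeff_zero_eq_constantCoeff_apply,
    map_pow, coeff_succ_X_mul, coeff_zero_eq_constantCoeff_apply]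

lemma natCast_mul_coeff_pow_succ {R : Type*} [CommSemiring R] (f : R⟦X⟧) (m n : ℕ) :
    n * coeff n (f ^ (m + 1)) = (m + 1 : ℕ) * coeff n (f ^ m * (X * d⁄dX R f)) := by
  have hpow : X * d⁄dX R (f ^ (m + 1)) = (m + 1) • (f ^ m * (X * d⁄dX R f)) := by
    rw [derivative_pow, Nat.add_sub_cancel, nsmul_eq_mul]
    ring
  rw [← coeff_X_mul_derivative, hpow, map_nsmul, nsmul_eq_mul]

section Field

variable {K : Type*} [Field K] [CharZero K] {f : K⟦X⟧}

lemma coeff_pow_mul_X_mul_derivative (h0 : constantCoeff f = 0) (h1 : coeff 1 f = 1)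
    (hf : X * d⁄dX K f * (1 - f) = f) (m d : ℕ) :
    coeff (m + d + 1) (f ^ m * (X * d⁄dX K f)) =
      ((m + d + 1 : ℕ) : K) ^ d / (d.factorial : K) := by
  induction d generalizing m with
  | zero =>
    have h := natCast_mul_coeff_pow_succ f m (m + 1)
    rw [coeff_pow_self h0, h1, one_pow] at h
    rw [add_zero, pow_zero, Nat.factorial_zero, Nat.cast_one, div_one]
    exact (mul_left_cancel₀ (Nat.cast_ne_zero.2 m.succ_ne_zero) h).symm
  | succ d ih =>
    have hd : (d.factorial : K) ≠ 0 := Nat.cast_ne_zero.2 d.factorial_ne_zero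
    have hsplit : f ^ m * (X * d⁄dX K f) = f ^ (m + 1) * (X * d⁄dX K f) + f ^ (m + 1) := by
      linear_combination f ^ m * hf
    have hpow := natCast_mul_coeff_pow_succ f m (m + (d + 1) + 1)
    have hnext := ih (m + 1)
    rw [show m + 1 + d + 1 = m + (d + 1) + 1 by ring, eq_div_iff hd] at hnext
    have hd' : ((d + 1).factorial : K) ≠ 0 := Nat.cast_ne_zero.2 (d + 1).factorial_ne_zero
    rw [eq_div_iff hd']
    have hcoeff := congrArg (coeff (m + (d + 1) + 1)) hsplit
    rw [map_add] at hcoeff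
    rw [Nat.factorial_succ]
    push_cast at hcoeff hpow hnext ⊢
    linear_combination (m + (d + 1) + 1) * (d.factorial * hcoeff + hnext) + d.factorial * hpow

lemma natCast_mul_coeff_pow (h0 : constantCoeff f = 0) (h1 : coeff 1 f = 1)
    (hf : X * d⁄dX K f * (1 - f) = f) (m d : ℕ) :
    (m + d + 1 : ℕ) * coeff (m + d + 1) (f ^ (m + 1)) =
      (m + 1 : ℕ) * (((m + d + 1 : ℕ) : K) ^ d / (d.factorial : K)) := by
  rw [← coeff_pow_mul_X_mul_derivative h0 h1 hf, ← natCast_mul_coeff_pow_succ]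

end Field

lemma exists_eq_X_mul_subst {R : Type*} [CommRing R] {φ : R⟦X⟧} (hφ : IsUnit φ) :
    ∃ T : R⟦X⟧, constantCoeff T = 0 ∧ T = X * φ.subst T := by
  obtain ⟨ψ, hψ⟩ := hφ.exists_right_inv
  have h0 : constantCoeff (X * ψ) = 0 := by rw [map_mul, constantCoeff_X, zero_mul]
  have h1 : IsUnit (coeff 1 (X * ψ)) := by
    rw [coeff_succ_X_mul, coeff_zero_eq_constantCoeff_apply]
    exact (IsUnit.of_mul_eq_one_right φ hψ).map constantCoeff
  let T := substInvOfIsUnit (X * ψ) h1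
  have hT : HasSubst T := HasSubst.substInvOfIsUnit _ h1
  have hinv : T * ψ.subst T = X := by
    rw [← subst_substInvOfIsUnit_right (X * ψ) h0 h1, subst_mul hT, subst_X hT]
  have hone : φ.subst T * ψ.subst T = 1 := by
    rw [← subst_mul hT, hψ, ← coe_substAlgHom hT, map_one]
  exact ⟨T, constantCoeff_substInvOfIsUnit _ h1, by linear_combination φ.subst T * hinv - T * hone⟩

lemma constantCoeff_subst_of_constantCoeff_eq_zero {R : Type*} [CommRing R] {g : R⟦X⟧}
    (hg : constantCoeff g = 0) (f : R⟦X⟧) : constantCoeff (f.subst g) = constantCoeff f := by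
  rw [← coeff_zero_eq_constantCoeff_apply, coeff_subst' (.of_constantCoeff_zero' hg),
    finsum_eq_single _ 0 fun d hd ↦ by rw [coeff_pow_eq_zero hg (Nat.pos_of_ne_zero hd), smul_zero],
    pow_zero, coeff_zero_one, smul_eq_mul, mul_one, coeff_zero_eq_constantCoeff_apply]

section

variable {A : Type*} [CommRing A] [Algebra ℚ A] {T : A⟦X⟧} (h0 : constantCoeff T = 0)
  (hT : T = X * (exp A).subst T)

include h0 hT

lemma coeff_one_of_eq_X_mul_exp_subst : coeff 1 T = 1 := by
  rw [hT, coeff_succ_X_mul, coeff_zero_eq_constantCoeff_apply,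
    constantCoeff_subst_of_constantCoeff_eq_zero h0, constantCoeff_exp]

lemma X_mul_derivative_mul_one_sub_of_eq_X_mul_exp_subst : X * d⁄dX A T * (1 - T) = T := by
  have hsubst := HasSubst.of_constantCoeff_zero' h0
  have hderiv := congrArg (d⁄dX A) hT
  rw [Derivation.leibniz, derivative_subst hsubst, derivative_exp, derivative_X] at hderiv
  simp only [smul_eq_mul, mul_one] at hderiv
  linear_combination X * hderiv - (X * d⁄dX A T + 1) * hT

end

lemma X_mul_derivative_Yq : X * d⁄dX ℚ Yq = Zq := by
  ext n
  rw [coeff_X_mul_derivative, Yq, Zq, coeff_mk, coeff_mk]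
  cases n with
  | zero => rw [Nat.cast_zero, zero_mul, if_pos rfl]
  | succ n =>
    rw [if_neg n.succ_ne_zero, if_neg n.succ_ne_zero, Nat.add_sub_cancel, pow_succ']
    ring

lemma constantCoeff_Yq : constantCoeff Yq = 0 := by
  rw [← coeff_zero_eq_constantCoeff_apply, Yq, coeff_mk, if_pos rfl]

lemma Yq_eq_X_mul_exp_subst : Yq = X * (exp ℚ).subst Yq := by
  obtain ⟨T, h0, hT⟩ := exists_eq_X_mul_subst (isUnit_exp ℚ)
  suffices Yq = T by rwa [this]
  ext n
  cases n with
  | zero => rw [coeff_zero_eq_constantCoeff_apply, constantCoeff_Yq,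
      coeff_zero_eq_constantCoeff_apply, h0]
  | succ n =>
    have h := natCast_mul_coeff_pow h0 (coeff_one_of_eq_X_mul_exp_subst h0 hT)
      (X_mul_derivative_mul_one_sub_of_eq_X_mul_exp_subst h0 hT) 0 n
    rw [zero_add, zero_add, pow_one, Nat.cast_one, one_mul] at h
    apply mul_left_cancel₀ (Nat.cast_ne_zero.2 n.succ_ne_zero : ((n + 1 : ℕ) : ℚ) ≠ 0)
    rw [h, Yq, coeff_mk, if_neg n.succ_ne_zero, Nat.add_sub_cancel, Nat.factorial_succ,
      Nat.cast_mul]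
    field_simp

lemma Zq_mul_one_sub_Yq : Zq * (1 - Yq) = Yq := by
  rw [← X_mul_derivative_Yq,
    X_mul_derivative_mul_one_sub_of_eq_X_mul_exp_subst constantCoeff_Yq Yq_eq_X_mul_exp_subst]

lemma natCast_mul_coeff_Yq_pow (l d : ℕ) : (l + d + 1 : ℕ) * coeff (l + d + 1) (Yq ^ (l + 1)) =
    (l + 1 : ℕ) * (((l + d + 1 : ℕ) : ℚ) ^ d / (d.factorial : ℚ)) :=
  natCast_mul_coeff_pow constantCoeff_Yq
    (coeff_one_of_eq_X_mul_exp_subst constantCoeff_Yq Yq_eq_X_mul_exp_subst)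
    (X_mul_derivative_mul_one_sub_of_eq_X_mul_exp_subst constantCoeff_Yq Yq_eq_X_mul_exp_subst) l d

end TreeFunction

section DistanceSeries

open PowerSeries

lemma coeff_X_mul_subst {R : Type*} [CommRing R] {g : R⟦X⟧} (hg : constantCoeff g = 0) (f : R⟦X⟧)
    (n : ℕ) : coeff n ((X * f).subst g) = ∑ l ∈ range n, coeff l f * coeff n (g ^ (l + 1)) := by
  have hsupp : (support fun d ↦ coeff d (X * f) • coeff n (g ^ d)) ⊆ range (n + 1) := by
    intro d hd
    by_contra hdn
    refine hd ?_
    simp only [coe_range, Set.mem_Iio, not_lt] at hdn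
    simp only [coeff_pow_eq_zero hg hdn, smul_zero]
  rw [coeff_subst' (.of_constantCoeff_zero' hg), finsum_eq_sum_of_support_subset _ hsupp,
    sum_range_succ', coeff_zero_X_mul, zero_smul, add_zero]
  simp only [coeff_succ_X_mul, smul_eq_mul]

open Classical in
/-- The exponential generating function of the sums of `h (G.dist a b)` over all Cayley trees `G`
on `n` vertices and all ordered pairs `(a, b)` of vertices. -/
noncomputable def distSeries (h : ℕ → ℚ) : ℚ⟦X⟧ :=
  PowerSeries.mk fun n ↦ (∑ G : SimpleGraph (Fin n) with G.Connected ∧ G.IsAcyclic,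
    ∑ a, ∑ b, h (G.dist a b)) / n.factorial

lemma distSeries_add (h₁ h₂ : ℕ → ℚ) :
    distSeries (fun l ↦ h₁ l + h₂ l) = distSeries h₁ + distSeries h₂ := by
  ext n
  simp only [distSeries, coeff_mk, map_add, sum_add_distrib, add_div]

lemma distSeries_const_mul (c : ℚ) (h : ℕ → ℚ) :
    distSeries (fun l ↦ c * h l) = c • distSeries h := by
  ext n
  simp only [distSeries, coeff_mk, map_smul, smul_eq_mul, ← mul_sum, mul_div_assoc]

lemma distSeries_eq_subst (h : ℕ → ℚ) : distSeries h = (X * PowerSeries.mk h).subst Yq := by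
  ext n
  rw [coeff_X_mul_subst constantCoeff_Yq, distSeries, coeff_mk, sum_isTree_sum_dist, sum_div,
    Fintype.card_fin]
  refine sum_congr rfl fun l hl ↦ ?_
  obtain ⟨d, rfl⟩ := Nat.exists_eq_add_of_lt (mem_range.1 hl)
  have hn : ((l + d + 1 : ℕ) : ℚ) ≠ 0 := Nat.cast_ne_zero.2 (l + d).succ_ne_zero
  have hcoeff := natCast_mul_coeff_Yq_pow l d
  have hfact : ((l + d).factorial : ℚ) = d.factorial * (l + d).descFactorial l := by
    rw [← Nat.cast_mul, ← Nat.factorial_mul_descFactorial (Nat.le_add_right l d),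
      Nat.add_sub_cancel_left]
  have hd : (d.factorial : ℚ) ≠ 0 := Nat.cast_ne_zero.2 d.factorial_ne_zero
  have hld : ((l + d).descFactorial l : ℚ) ≠ 0 :=
    Nat.cast_ne_zero.2 (Nat.descFactorial_pos.2 (Nat.le_add_right l d)).ne'
  apply mul_left_cancel₀ hn
  rw [coeff_mk, mul_left_comm _ (h l), hcoeff, Nat.factorial_succ, Nat.add_sub_cancel,
    Nat.add_sub_cancel_left]
  push_cast at hn ⊢
  rw [hfact]
  field_simp

lemma X_mul_mk_choose_eq_pow {R : Type*} [CommRing R] (k : ℕ) :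
    X * PowerSeries.mk (fun l : ℕ ↦ (l.choose k : R)) = (X * PowerSeries.mk 1) ^ (k + 1) := by
  rw [mul_pow, mk_one_pow_eq_mk_choose_add, pow_succ', mul_assoc]
  congr 1
  ext n
  rw [coeff_mk, coeff_X_pow_mul']
  split_ifs with hk
  · rw [coeff_mk, Nat.add_sub_cancel' hk]
  · rw [Nat.choose_eq_zero_of_lt (not_le.1 hk), Nat.cast_zero]

lemma X_mul_mk_one_subst_Yq : (X * PowerSeries.mk 1 : ℚ⟦X⟧).subst Yq = Zq := by
  have hY : HasSubst Yq := .of_constantCoeff_zero' constantCoeff_Yq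
  have hgeom : (X * PowerSeries.mk 1 : ℚ⟦X⟧) * (1 - X) = X := by
    rw [mul_assoc, mk_one_mul_one_sub_eq_one, mul_one]
  have hsubst := congrArg (substAlgHom hY) hgeom
  rw [map_mul, map_sub, map_one, substAlgHom_X, coe_substAlgHom] at hsubst
  have hne : 1 - Yq ≠ 0 := fun h ↦ by
    simpa [constantCoeff_Yq] using congrArg constantCoeff h
  exact mul_right_cancel₀ hne (hsubst.trans Zq_mul_one_sub_Yq.symm)

lemma distSeries_choose (k : ℕ) : distSeries (fun l : ℕ ↦ (l.choose k : ℚ)) = Zq ^ (k + 1) := by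
  rw [distSeries_eq_subst, X_mul_mk_choose_eq_pow,
    subst_pow (.of_constantCoeff_zero' constantCoeff_Yq), X_mul_mk_one_subst_Yq]

lemma mul_choose_eq_add (l j : ℕ) :
    l * l.choose j = (j + 1) * l.choose (j + 1) + j * l.choose j := by
  obtain hl | hl := lt_or_ge l j
  · rw [Nat.choose_eq_zero_of_lt hl, Nat.choose_eq_zero_of_lt (hl.trans j.lt_succ_self), mul_zero,
      mul_zero, mul_zero, add_zero]
  · rw [mul_comm (j + 1), Nat.choose_succ_right_eq, mul_comm j, ← mul_add, Nat.sub_add_cancel hl,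
      mul_comm]

lemma distSeries_pow_mul_choose_mem (k j : ℕ) :
    distSeries (fun l : ℕ ↦ (l : ℚ) ^ k * l.choose j) ∈ Algebra.adjoin ℚ {Zq} := by
  induction k generalizing j with
  | zero =>
    simp only [pow_zero, one_mul, distSeries_choose]
    exact pow_mem (Algebra.self_mem_adjoin_singleton ℚ Zq) (j + 1)
  | succ k ih =>
    have hrec : (fun l : ℕ ↦ (l : ℚ) ^ (k + 1) * l.choose j) = fun l : ℕ ↦
        (j + 1 : ℚ) * ((l : ℚ) ^ k * l.choose (j + 1)) + j * ((l : ℚ) ^ k * l.choose j) := by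
      funext l
      have hchoose := congrArg (Nat.cast (R := ℚ)) (mul_choose_eq_add l j)
      push_cast at hchoose
      linear_combination (l : ℚ) ^ k * hchoose
    rw [hrec, distSeries_add, distSeries_const_mul, distSeries_const_mul]
    exact add_mem (Subalgebra.smul_mem _ (ih (j + 1)) _) (Subalgebra.smul_mem _ (ih j) _)

end DistanceSeries

end

theorem dendrology_general (k : ℕ) :
    (PowerSeries.mk fun n => (mCayley n k : ℚ) / n.factorial) ∈ Algebra.adjoin ℚ {Zq} ∧
    (PowerSeries.mk fun n => (pCayley n k : ℚ) / n.factorial) ∈ Algebra.adjoin ℚ {Zq} := by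
  have hm : (PowerSeries.mk fun n => (mCayley n k : ℚ) / n.factorial) =
      distSeries fun l : ℕ ↦ (l : ℚ) ^ k * l.choose 0 := by
    simp only [distSeries, mCayley, Nat.choose_zero_right, Nat.cast_sum, Nat.cast_pow, Nat.cast_one,
      mul_one]
  have hp : (PowerSeries.mk fun n => (pCayley n k : ℚ) / n.factorial) =
      distSeries fun l : ℕ ↦ (l : ℚ) ^ 0 * l.choose k := by
    simp only [distSeries, pCayley, Nat.cast_sum, pow_zero, one_mul]
  exact ⟨hm ▸ distSeries_pow_mul_choose_mem k 0, hp ▸ distSeries_pow_mul_choose_mem 0 k⟩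

/-- For every `k`, the series `Σ_{n≥1} (m_{n,k}/n!) qⁿ` and `Σ_{n≥1} (p_{n,k}/n!) qⁿ`
lie in `𝒜 = ℚ[Y,Z]`. -/
theorem dendrology (k : ℕ) :
    (PowerSeries.mk fun n => (mCayley n k : ℚ) / n.factorial) ∈
      Algebra.adjoin ℚ {Yq, Zq} ∧
    (PowerSeries.mk fun n => (pCayley n k : ℚ) / n.factorial) ∈
      Algebra.adjoin ℚ {Yq, Zq} :=
  (dendrology_general k).imp (Algebra.adjoin_mono (Set.subset_insert Yq {Zq}) ·)
    (Algebra.adjoin_mono (Set.subset_insert Yq {Zq}) ·)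
end

section
/- For every real number q with |q| < 1/e, the series Σ_{n≥1} (n^{n−1}/n!) q^n converges to a real number y such that y · e^{−y} = q; that is, there exists y ∈ ℝ with HasSum (n ↦ (n^{n−1}/n!) q^n) y and y·exp(−y) = q. Consequently, on the disc |q| < 1/e the function Y(q) is the inverse of the function y ↦ y/e^y. -/
open Real

/-!
Write `Y` for the sum of the series. Substituting `q = y e^{-y}` and expanding every `e^{-ny}` turns
`Y(y e^{-y})` into an absolutely convergent double series. For `N ≥ 2` its part of degree `N` in `y`
is, up to the factor `1 / N!`, the `N`-th finite difference of `x ↦ x ^ (N - 1)` at `0`, hence zero,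
so `Y(y e^{-y}) = y` for small `y`. As `y ↦ y e^{-y}` maps neighbourhoods of `0` onto neighbourhoods
of `0`, also `Y(q) e^{-Y(q)} = q` for small `q`, and both sides are analytic on the ball of radius
`1/e`. All of this takes place in an arbitrary real Banach algebra.
-/

open Filter Finset FormalMultilinearSeries
open scoped Nat Topology

section General

theorem hasSum_sum_antidiagonal {M α : Type*} [AddMonoid M] [HasAntidiagonal M] [AddCommMonoid α]
    [TopologicalSpace α] [ContinuousAdd α] [RegularSpace α] {f : M × M → α} {a : α}
    (hf : HasSum f a) : HasSum (fun N ↦ ∑ p ∈ antidiagonal N, f p) a := by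
  have hsigma := (HasAntidiagonal.sigmaAntidiagonalEquivProd.hasSum_iff.mpr hf).sigma
    fun N ↦ hasSum_fintype _
  simpa [sum_attach _ f] using hsigma

theorem sum_antidiagonal_pow_mul_neg_one_pow_div_factorial {K : Type*} [Field K] [CharZero K]
    {j N : ℕ} (hj : j < N) :
    ∑ p ∈ antidiagonal N, (p.1 : K) ^ j * (-1) ^ p.2 / (p.1 ! * p.2 !) = 0 := by
  have hdiff := congrFun (fwdDiff_iter_pow_eq_zero_of_lt (R := K) hj) 0
  rw [fwdDiff_iter_eq_sum_shift, Pi.zero_apply,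
    ← Nat.sum_antidiagonal_eq_sum_range_succ
      (fun k m ↦ ((-1 : ℤ) ^ m * N.choose k) • ((0 : K) + k • (1 : K)) ^ j)] at hdiff
  rw [← mul_eq_zero_iff_left (Nat.cast_ne_zero.mpr N.factorial_ne_zero : (N ! : K) ≠ 0), ← hdiff,
    mul_sum]
  refine sum_congr rfl fun p hp ↦ ?_
  obtain rfl := mem_antidiagonal.mp hp
  simp only [zsmul_eq_mul, nsmul_eq_mul, mul_one, zero_add]
  push_cast
  rw [Nat.cast_add_choose]
  ring

theorem mul_exp_pow_of_commute {A : Type*} [NormedRing A] [NormedAlgebra ℚ A] [CompleteSpace A]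
    {x y : A} (hxy : Commute x y) (n : ℕ) :
    (x * NormedSpace.exp y) ^ n = x ^ n * NormedSpace.exp (n • y) := by
  rw [hxy.exp_right.mul_pow, NormedSpace.exp_nsmul]

end General

/-- The coefficients `n ^ (n - 1) / n!` of the tree function, with value `0` at `n = 0`, where the
formula would read `0 ^ 0 / 0! = 1` because of truncated subtraction. -/
noncomputable def treeCoeff (n : ℕ) : ℝ := if n = 0 then 0 else (n : ℝ) ^ (n - 1) / n !

@[simp]
theorem treeCoeff_zero : treeCoeff 0 = 0 := if_pos rfl

theorem treeCoeff_of_ne_zero {n : ℕ} (hn : n ≠ 0) : treeCoeff n = (n : ℝ) ^ (n - 1) / n ! :=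
  if_neg hn

theorem treeCoeff_nonneg (n : ℕ) : 0 ≤ treeCoeff n := by
  unfold treeCoeff
  split_ifs <;> positivity

theorem treeCoeff_le_exp_one_pow (n : ℕ) : treeCoeff n ≤ exp 1 ^ n := by
  rcases eq_or_ne n 0 with rfl | hn
  · simp
  have hn_one : (1 : ℝ) ≤ n := mod_cast Nat.one_le_iff_ne_zero.mpr hn
  calc treeCoeff n = (n : ℝ) ^ (n - 1) / n ! := treeCoeff_of_ne_zero hn
    _ ≤ (n : ℝ) ^ n / n ! := by gcongr; exact n.sub_le 1
    _ ≤ exp n := pow_div_factorial_le_exp _ n.cast_nonneg n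
    _ = exp 1 ^ n := (exp_one_pow n).symm

theorem sum_antidiagonal_treeCoeff_mul_neg_pow_div_factorial (N : ℕ) :
    ∑ p ∈ antidiagonal N, treeCoeff p.1 * ((-p.1 : ℝ) ^ p.2 / p.2 !) = if N = 1 then 1 else 0 := by
  rcases N with _ | _ | N
  · simp
  · simp [Nat.antidiagonal_succ, treeCoeff]
  rw [if_neg (by lia), ← sum_antidiagonal_pow_mul_neg_one_pow_div_factorial (K := ℝ)
    (Nat.lt_succ_self (N + 1))]
  refine sum_congr rfl fun p hp ↦ ?_
  have hsum := mem_antidiagonal.mp hp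
  rcases eq_or_ne p.1 0 with hzero | hne
  · simp [hzero]
  have hpow : (p.1 : ℝ) ^ (N + 1) = (p.1 : ℝ) ^ (p.1 - 1) * (p.1 : ℝ) ^ p.2 := by
    rw [← pow_add]
    congr 1
    lia
  rw [treeCoeff_of_ne_zero hne, hpow, neg_pow]
  ring

/-- The tree function `Y(x) = ∑ n ≥ 1, n ^ (n - 1) / n! • x ^ n`, with `x` in a Banach algebra. -/
noncomputable def treeFunction {A : Type*} [NormedRing A] [NormedAlgebra ℝ A] (x : A) : A :=
  ofScalarsSum treeCoeff x

section TreeFunction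

variable {A : Type*} [NormedRing A] [NormedAlgebra ℝ A]

variable (A) in
theorem norm_ofScalars_treeCoeff_le (n : ℕ) : ‖ofScalars A treeCoeff n‖ ≤ exp 1 ^ n := by
  rcases n.eq_zero_or_pos with rfl | hn
  · rw [ofScalars_norm_eq_mul, treeCoeff_zero, norm_zero, zero_mul]
    positivity
  calc ‖ofScalars A treeCoeff n‖ ≤ ‖treeCoeff n‖ := ofScalars_norm_le A treeCoeff n hn
    _ = treeCoeff n := norm_of_nonneg (treeCoeff_nonneg n)
    _ ≤ exp 1 ^ n := treeCoeff_le_exp_one_pow n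

variable (A) in
theorem ofReal_one_div_exp_one_le_radius_ofScalars_treeCoeff :
    ENNReal.ofReal (1 / exp 1) ≤ (ofScalars A treeCoeff).radius := by
  refine le_radius_of_bound _ 1 fun n ↦ ?_
  rw [coe_toNNReal _ (by positivity)]
  calc ‖ofScalars A treeCoeff n‖ * (1 / exp 1) ^ n
    _ ≤ exp 1 ^ n * (1 / exp 1) ^ n := by gcongr; exact norm_ofScalars_treeCoeff_le A n
    _ = 1 := by simp

variable (A) in
theorem ball_subset_eball_radius_ofScalars_treeCoeff :
    Metric.ball (0 : A) (1 / exp 1) ⊆ Metric.eball 0 (ofScalars A treeCoeff).radius := by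
  rw [← Metric.eball_ofReal]
  exact Metric.eball_subset_eball (ofReal_one_div_exp_one_le_radius_ofScalars_treeCoeff A)

variable [CompleteSpace A]

theorem hasSum_treeFunction {x : A} (hx : ‖x‖ < 1 / exp 1) :
    HasSum (fun n ↦ treeCoeff n • x ^ n) (treeFunction x) := by
  have hsum := (ofScalars A treeCoeff).hasSum
    (ball_subset_eball_radius_ofScalars_treeCoeff A (mem_ball_zero_iff.mpr hx))
  simp only [ofScalars_apply_eq] at hsum
  exact hsum

variable (A) in
theorem analyticOnNhd_treeFunction :
    AnalyticOnNhd ℝ (treeFunction : A → A) (Metric.ball 0 (1 / exp 1)) := by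
  have hradius : 0 < (ofScalars A treeCoeff).radius :=
    (ENNReal.ofReal_pos.mpr (by positivity)).trans_le
      (ofReal_one_div_exp_one_le_radius_ofScalars_treeCoeff A)
  exact ((ofScalars A treeCoeff).hasFPowerSeriesOnBall hradius).analyticOnNhd.mono
    (ball_subset_eball_radius_ofScalars_treeCoeff A)

end TreeFunction

section LeftInverse

variable {A : Type*} [NormedRing A] [NormedAlgebra ℝ A]

/-- The `(n, m)` term of the double series obtained from `Y(y e^{-y})` by expanding each
`e^{-ny}`. -/
noncomputable def treeExpTerm (y : A) (p : ℕ × ℕ) : A :=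
  (treeCoeff p.1 * ((-p.1 : ℝ) ^ p.2 / p.2 !)) • y ^ (p.1 + p.2)

theorem sum_antidiagonal_treeExpTerm (y : A) (N : ℕ) :
    ∑ p ∈ antidiagonal N, treeExpTerm y p = if N = 1 then y else 0 := by
  calc ∑ p ∈ antidiagonal N, treeExpTerm y p
    _ = ∑ p ∈ antidiagonal N, (treeCoeff p.1 * ((-p.1 : ℝ) ^ p.2 / p.2 !)) • y ^ N :=
      sum_congr rfl fun p hp ↦ by rw [treeExpTerm, mem_antidiagonal.mp hp]
    _ = (if N = 1 then (1 : ℝ) else 0) • y ^ N := by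
      rw [← sum_smul, sum_antidiagonal_treeCoeff_mul_neg_pow_div_factorial]
    _ = if N = 1 then y else 0 := by split_ifs with hN <;> simp [hN]

theorem norm_treeExpTerm_le (y : A) (n m : ℕ) :
    ‖treeExpTerm y (n, m)‖ ≤ treeCoeff n * ‖y‖ ^ n * ((n * ‖y‖) ^ m / m !) := by
  rcases n.eq_zero_or_pos with rfl | hn
  · simp [treeExpTerm]
  calc ‖treeExpTerm y (n, m)‖
    _ = treeCoeff n * (n ^ m / m !) * ‖y ^ (n + m)‖ := by
      simp [treeExpTerm, norm_smul, abs_of_nonneg (treeCoeff_nonneg n)]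
    _ ≤ treeCoeff n * (n ^ m / m !) * ‖y‖ ^ (n + m) := by
      gcongr
      · exact mul_nonneg (treeCoeff_nonneg n) (by positivity)
      · exact norm_pow_le' y (by lia)
    _ = treeCoeff n * ‖y‖ ^ n * ((n * ‖y‖) ^ m / m !) := by ring

variable [CompleteSpace A]

theorem summable_treeExpTerm {y : A} (hy : ‖y‖ * exp ‖y‖ < 1 / exp 1) :
    Summable (treeExpTerm y) := by
  have hinner (n : ℕ) : HasSum (fun m ↦ treeCoeff n * ‖y‖ ^ n * ((n * ‖y‖) ^ m / m !))
      (treeCoeff n • (‖y‖ * exp ‖y‖) ^ n) := by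
    have hexp := (NormedSpace.expSeries_div_hasSum_exp (n * ‖y‖)).mul_left (treeCoeff n * ‖y‖ ^ n)
    rwa [← exp_eq_exp_ℝ, exp_nat_mul, mul_assoc, ← mul_pow, ← smul_eq_mul (treeCoeff n)] at hexp
  have houter : Summable fun n ↦ treeCoeff n • (‖y‖ * exp ‖y‖) ^ n :=
    (hasSum_treeFunction (by rwa [norm_of_nonneg (by positivity)])).summable
  refine .of_norm_bounded (g := fun p ↦ treeCoeff p.1 * ‖y‖ ^ p.1 * ((p.1 * ‖y‖) ^ p.2 / p.2 !)) ?_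
    fun p ↦ norm_treeExpTerm_le y p.1 p.2
  rw [summable_prod_of_nonneg fun p ↦ by have := treeCoeff_nonneg p.1; positivity]
  exact ⟨fun n ↦ (hinner n).summable, houter.congr fun n ↦ (hinner n).tsum_eq.symm⟩

theorem hasSum_treeExpTerm_fiber (y : A) (n : ℕ) :
    HasSum (fun m ↦ treeExpTerm y (n, m)) (treeCoeff n • (y * NormedSpace.exp (-y)) ^ n) := by
  let _ : NormedAlgebra ℚ A := .restrictScalars ℚ ℝ A
  have hpow : (y * NormedSpace.exp (-y)) ^ n = y ^ n * NormedSpace.exp ((-n : ℝ) • y) := by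
    rw [mul_exp_pow_of_commute (Commute.refl y).neg_right, smul_neg, neg_smul,
      Nat.cast_smul_eq_nsmul]
  rw [hpow]
  have hexp := ((NormedSpace.exp_series_hasSum_exp' (𝕂 := ℝ) ((-n : ℝ) • y)).mul_left
    (y ^ n)).const_smul (treeCoeff n)
  refine hexp.congr_fun fun m ↦ ?_
  rw [treeExpTerm, smul_pow, smul_smul, mul_smul_comm, smul_smul, ← pow_add, div_eq_inv_mul]

theorem treeFunction_mul_exp_neg {y : A} (hy : ‖y‖ * exp ‖y‖ < 1 / exp 1) :
    treeFunction (y * NormedSpace.exp (-y)) = y := by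
  have hsum := (summable_treeExpTerm hy).hasSum
  have hrows := hsum.prod_fiberwise (hasSum_treeExpTerm_fiber y)
  have hdiag := hasSum_sum_antidiagonal hsum
  simp only [sum_antidiagonal_treeExpTerm] at hdiag
  rw [treeFunction, ofScalars_sum_eq, hrows.tsum_eq]
  exact hdiag.unique (hasSum_ite_eq 1 y)

end LeftInverse

section RightInverse

variable (A : Type*) [NormedRing A] [NormedAlgebra ℝ A] [CompleteSpace A]

theorem hasStrictFDerivAt_mul_exp_neg_zero :
    HasStrictFDerivAt (fun y : A ↦ y * NormedSpace.exp (-y)) (ContinuousLinearMap.id ℝ A) 0 := by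
  have hexp : HasStrictFDerivAt (NormedSpace.exp : A → A) (1 : A →L[ℝ] A) (-0) := by
    simpa using hasStrictFDerivAt_exp_zero (𝕂 := ℝ) (𝔸 := A)
  refine ((hasStrictFDerivAt_id (0 : A)).mul'
    (hexp.comp 0 (hasStrictFDerivAt_id (0 : A)).neg)).congr_fderiv ?_
  ext
  simp

theorem eventually_treeFunction_mul_exp_neg :
    ∀ᶠ y : A in 𝓝 0, treeFunction (y * NormedSpace.exp (-y)) = y := by
  have hcont : ContinuousAt (fun y : A ↦ ‖y‖ * exp ‖y‖) 0 := by fun_prop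
  have hsmall : ‖(0 : A)‖ * exp ‖(0 : A)‖ < 1 / exp 1 := by simp [exp_pos]
  filter_upwards [hcont.eventually_lt_const hsmall] with y hy using treeFunction_mul_exp_neg hy

theorem eventually_treeFunction_mul_exp_neg_treeFunction :
    ∀ᶠ q : A in 𝓝 0, treeFunction q * NormedSpace.exp (-treeFunction q) = q := by
  have hmap : map (fun y : A ↦ y * NormedSpace.exp (-y)) (𝓝 0) = 𝓝 0 := by
    simpa using (hasStrictFDerivAt_mul_exp_neg_zero A).map_nhds_eq_of_equiv
      (f' := ContinuousLinearEquiv.refl ℝ A)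
  rw [← hmap, eventually_map]
  filter_upwards [eventually_treeFunction_mul_exp_neg A] with y hy
  rw [hy]

variable {A}

theorem treeFunction_mul_exp_neg_treeFunction {q : A} (hq : ‖q‖ < 1 / exp 1) :
    treeFunction q * NormedSpace.exp (-treeFunction q) = q := by
  have hanalytic : AnalyticOnNhd ℝ
      (fun x : A ↦ treeFunction x * NormedSpace.exp (-treeFunction x))
      (Metric.ball 0 (1 / exp 1)) := fun x hx ↦
    have hY := analyticOnNhd_treeFunction A x hx
    hY.mul ((NormedSpace.exp_analytic _).comp hY.neg)
  exact hanalytic.eqOn_of_preconnected_of_eventuallyEq analyticOnNhd_id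
    (convex_ball _ _).isPreconnected (Metric.mem_ball_self (by positivity))
    (eventually_treeFunction_mul_exp_neg_treeFunction A) (mem_ball_zero_iff.mpr hq)

end RightInverse

theorem hasSum_Y_inverse_of_abs_lt_general {A : Type*} [NormedRing A] [NormedAlgebra ℝ A]
    [CompleteSpace A] (q : A) (hq : ‖q‖ < 1 / Real.exp 1) :
    ∃ y : A,
      HasSum (fun n : ℕ =>
        if n = 0 then 0 else ((n : ℝ) ^ (n - 1) / n.factorial) • q ^ n) y ∧
      y * NormedSpace.exp (-y) = q :=
  ⟨treeFunction q, by simpa only [treeCoeff, ite_smul, zero_smul] using hasSum_treeFunction hq,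
    treeFunction_mul_exp_neg_treeFunction hq⟩

/-- For every real `q` with `|q| < 1/e`, the series `Σ_{n≥1} (n^{n-1}/n!) qⁿ` converges
to some real `y` with `y·e^{-y} = q`; i.e. on the disc `|q| < 1/e` the function `Y(q)`
inverts `y ↦ y/e^y`. -/
theorem hasSum_Y_inverse_of_abs_lt (q : ℝ) (hq : |q| < 1 / Real.exp 1) :
    ∃ y : ℝ,
      HasSum (fun n : ℕ =>
        if n = 0 then 0 else (n : ℝ) ^ (n - 1) / n.factorial * q ^ n) y ∧
      y * Real.exp (-y) = q := by
  simpa only [exp_eq_exp_ℝ, smul_eq_mul, norm_eq_abs] using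
    hasSum_Y_inverse_of_abs_lt_general q hq
end
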